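/- arXiv:1704.06195 — 3 statements merged into one kernel-verified Lean document; each statement's English description precedes it below -/
import Mathlib

section
/- (Analytical Lieb–Sokal lemma.) Let p and q be nonzero multiaffine real stable polynomials in ℝ[z_1,…,z_n], and assume r = q(∂)p is not identically zero. Let a ∈ ℝ^n be above the roots of p and let b ∈ ℝ^n be above the roots of the flip q̄. For each i ∈ [n] set φ_i = (∂_i p/p)(a) + (∂_i q̄/q̄)(b), and assume φ_i > 0 for every i. Then the point c = a + b − (1/φ_1, …, 1/φ_n) is above the roots of r, i.e. r(c+t) ≠ 0 for every t ∈ ℝ^n with all coordinates nonnegative. -/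
/-- A multivariate real polynomial is real stable if it does not vanish when all
variables take values in the open upper half plane. -/
def RealStable {σ : Type*} (p : MvPolynomial σ ℝ) : Prop :=
  ∀ z : σ → ℂ, (∀ i, 0 < (z i).im) → (MvPolynomial.aeval z) p ≠ 0

/-- degree at most 1 in each variable -/
def MultiAffine {σ : Type*} (p : MvPolynomial σ ℝ) : Prop :=
  ∀ m ∈ p.support, ∀ i, m i ≤ 1

/-- `a` is above the roots of `p` if `p` does not vanish on `a + ℝ₊ⁿ`. -/
def AboveRoots {σ : Type*} (p : MvPolynomial σ ℝ) (a : σ → ℝ) : Prop :=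
  ∀ t : σ → ℝ, (∀ i, 0 ≤ t i) → MvPolynomial.eval (a + t) p ≠ 0

/-- applying the differential-operator monomial `∂^m` to `p` -/
noncomputable def applyMon {σ : Type*} [Fintype σ] (m : σ →₀ ℕ) (p : MvPolynomial σ ℝ) :
    MvPolynomial σ ℝ :=
  (Finset.univ.toList (α := σ)).foldr
    (fun i g => (fun h => MvPolynomial.pderiv i h)^[m i] g) p

/-- `q(∂)p`: substitute `∂/∂zᵢ` for `zᵢ` in `q` and apply the resulting operator to `p`. -/
noncomputable def diffOp {σ : Type*} [Fintype σ] (q p : MvPolynomial σ ℝ) :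
    MvPolynomial σ ℝ :=
  ∑ m ∈ q.support, MvPolynomial.coeff m q • applyMon m p

/-- the flip of a multiaffine polynomial: `z^S ↦ z^{[n]∖S}` -/
noncomputable def flipPoly {σ : Type*} [Finite σ] (q : MvPolynomial σ ℝ) :
    MvPolynomial σ ℝ :=
  ∑ m ∈ q.support, MvPolynomial.monomial
    (Finsupp.equivFunOnFinite.symm fun i => 1 - m i) (MvPolynomial.coeff m q)

open MvPolynomial

section MultiAffineClosure

variable {σ : Type*}

theorem multiAffine_iff_coeff {P : MvPolynomial σ ℝ} :
    MultiAffine P ↔ ∀ m, coeff m P ≠ 0 → ∀ i, m i ≤ 1 := by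
  simp [MultiAffine, mem_support_iff]

theorem MultiAffine.add {P Q : MvPolynomial σ ℝ} (hP : MultiAffine P) (hQ : MultiAffine Q) :
    MultiAffine (P + Q) := by
  rw [multiAffine_iff_coeff] at *
  intro m hm
  by_cases h : coeff m P = 0
  · exact hQ m fun h' => hm (by simp [h, h'])
  · exact hP m h

theorem MultiAffine.C_mul {P : MvPolynomial σ ℝ} (hP : MultiAffine P) (c : ℝ) :
    MultiAffine (C c * P) := by
  rw [multiAffine_iff_coeff] at *
  intro m hm
  exact hP m fun h => hm (by simp [h])

theorem MultiAffine.map_pderiv {P : MvPolynomial σ ℝ} (hP : MultiAffine P) (i : σ) :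
    MultiAffine (pderiv i P) := by
  rw [multiAffine_iff_coeff] at *
  intro m hm k
  rw [coeff_pderiv] at hm
  have := hP _ (left_ne_zero_of_mul hm) k
  simp only [Finsupp.add_apply] at this
  omega

theorem multiAffine_iff_degreeOf {P : MvPolynomial σ ℝ} :
    MultiAffine P ↔ ∀ i, degreeOf i P ≤ 1 := by
  simp only [MultiAffine, degreeOf_le_iff]
  exact ⟨fun h i m hm => h m hm i, fun h m hm i => h i m hm⟩

theorem degreeOf_rename_eq_zero {τ : Type*} {f : σ → τ} {k : τ} (hk : k ∉ Set.range f)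
    (P : MvPolynomial σ ℝ) : degreeOf k (rename f P) = 0 := by
  classical
  rw [degreeOf_def, Multiset.count_eq_zero]
  intro h
  obtain ⟨x, -, rfl⟩ := Multiset.mem_map.1 (Multiset.mem_of_subset (degrees_rename f P) h)
  exact hk ⟨x, rfl⟩

theorem MultiAffine.rename_inl_mul_rename_inr {τ : Type*} {P : MvPolynomial σ ℝ}
    {Q : MvPolynomial τ ℝ} (hP : MultiAffine P) (hQ : MultiAffine Q) :
    MultiAffine (rename (Sum.inl : σ → σ ⊕ τ) P * rename Sum.inr Q) := by
  rw [multiAffine_iff_degreeOf] at *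
  rintro (i | i)
  · refine (degreeOf_mul_le _ _ _).trans ?_
    rw [degreeOf_rename_of_injective Sum.inl_injective, degreeOf_rename_eq_zero (by simp)]
    exact hP i
  · refine (degreeOf_mul_le _ _ _).trans ?_
    rw [degreeOf_rename_of_injective Sum.inr_injective, degreeOf_rename_eq_zero (by simp),
      zero_add]
    exact hQ i

theorem MultiAffine.pderiv_pderiv_self {P : MvPolynomial σ ℝ} (hP : MultiAffine P) (i : σ) :
    pderiv i (pderiv i P) = 0 := by
  rw [multiAffine_iff_coeff] at hP
  ext m
  rw [coeff_pderiv, coeff_pderiv, coeff_zero]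
  by_contra h
  have := hP _ (left_ne_zero_of_mul (left_ne_zero_of_mul h)) i
  simp at this

theorem pderiv_pderiv_comm (P : MvPolynomial σ ℝ) (i j : σ) :
    pderiv i (pderiv j P) = pderiv j (pderiv i P) := by
  classical
  obtain rfl | hij := eq_or_ne i j
  · rfl
  ext m
  simp only [coeff_pderiv, Finsupp.add_apply, Finsupp.single_apply, hij, hij.symm, if_false]
  rw [add_right_comm]
  push_cast
  ring

theorem MultiAffine.aeval_add_single [Fintype σ] [DecidableEq σ] {A : Type*} [CommRing A]
    [Algebra ℝ A] {P : MvPolynomial σ ℝ} (hP : MultiAffine P) (w : σ → A) (i : σ) (s : A) :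
    aeval (w + Pi.single i s) P = aeval w P + s * aeval w (pderiv i P) := by
  have key : ∀ m : σ →₀ ℕ, m i ≤ 1 → ∀ c : ℝ,
      aeval (w + Pi.single i s) (monomial m c) =
        aeval w (monomial m c) + s * aeval w (pderiv i (monomial m c)) := by
    intro m hm c
    have hoff : ∀ (v : σ → A) (m' : σ →₀ ℕ), (∀ k ≠ i, v k = w k) → (∀ k ≠ i, m' k = m k) →
        (m'.prod fun k e => v k ^ e) =
          v i ^ m' i * ∏ k ∈ Finset.univ.erase i, w k ^ m k := by
      intro v m' hv hm'
      rw [Finsupp.prod_fintype _ _ (by simp), ← Finset.mul_prod_erase _ _ (Finset.mem_univ i)]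
      congr 1
      refine Finset.prod_congr rfl fun k hk => ?_
      rw [hv k (Finset.ne_of_mem_erase hk), hm' k (Finset.ne_of_mem_erase hk)]
    rw [pderiv_monomial, aeval_monomial, aeval_monomial, aeval_monomial,
      hoff _ m (fun k hk => by simp [hk]) (fun _ _ => rfl),
      hoff w m (fun _ _ => rfl) (fun _ _ => rfl),
      hoff w (m - Finsupp.single i 1) (fun _ _ => rfl) (fun k hk => by simp [hk])]
    interval_cases h : m i
    · simp
    · simp [h]
      ring
  rw [P.as_sum]
  simp only [map_sum, Finset.mul_sum, ← Finset.sum_add_distrib]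
  exact Finset.sum_congr rfl fun m hm => key m (hP m hm i) _

theorem MultiAffine.eval_add_single [Fintype σ] [DecidableEq σ] {P : MvPolynomial σ ℝ}
    (hP : MultiAffine P) (w : σ → ℝ) (i : σ) (s : ℝ) :
    eval (w + Pi.single i s) P = eval w P + s * eval w (pderiv i P) :=
  hP.aeval_add_single w i s

end MultiAffineClosure

/-- A polynomial satisfies the Rayleigh inequalities if `P ∂ᵢ∂ⱼP ≤ ∂ᵢP ∂ⱼP` on all of `ℝ^σ`. -/
def Rayleigh {σ : Type*} (P : MvPolynomial σ ℝ) : Prop :=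
  ∀ (x : σ → ℝ) (i j : σ),
    eval x P * eval x (pderiv j (pderiv i P)) ≤ eval x (pderiv i P) * eval x (pderiv j P)

section Stability

variable {σ : Type*} [Fintype σ] [DecidableEq σ]

theorem continuous_aeval_complex {σ : Type*} (P : MvPolynomial σ ℝ) :
    Continuous fun z : σ → ℂ => aeval z P := by
  simp only [aeval_def, eval₂_eq]
  fun_prop

theorem aeval_ofReal {σ : Type*} (P : MvPolynomial σ ℝ) (x : σ → ℝ) :
    aeval (fun k => (x k : ℂ)) P = (eval x P : ℂ) :=
  aeval_algebraMap_apply ℂ x P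

theorem RealStable.im_mul_conj_pderiv_nonneg {P : MvPolynomial σ ℝ} (hs : RealStable P)
    (hP : MultiAffine P) (i : σ) (z : σ → ℂ) (hz : ∀ k, 0 < (z k).im) :
    0 ≤ (aeval z P * (starRingEnd ℂ) (aeval z (pderiv i P))).im := by
  by_contra! hlt
  have hB : aeval z (pderiv i P) ≠ 0 := by
    intro h
    simp [h] at hlt
  set u := aeval z P
  set v := aeval z (pderiv i P)
  have him : 0 < (-u / v).im := by
    have hv : 0 < Complex.normSq v := Complex.normSq_pos.2 hB
    have : -u / v = ((Complex.normSq v)⁻¹ : ℝ) * -(u * (starRingEnd ℂ) v) := by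
      rw [div_eq_mul_inv, Complex.inv_def]
      ring
    rw [this, Complex.im_ofReal_mul, Complex.neg_im]
    exact mul_pos (inv_pos.2 hv) (neg_pos.2 hlt)
  refine hs (z + Pi.single i (-u / v)) (fun k => ?_) ?_
  · obtain rfl | hk := eq_or_ne k i
    · simpa using add_pos (hz k) him
    · simpa [hk] using hz k
  · rw [hP.aeval_add_single]
    change u + -u / v * v = 0
    rw [div_mul_cancel₀ _ hB, add_neg_cancel]

theorem RealStable.rayleigh {P : MvPolynomial σ ℝ} (hs : RealStable P) (hP : MultiAffine P) :
    Rayleigh P := by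
  intro x i j
  let z : ℝ → σ → ℂ := fun η => ((fun k => (x k : ℂ)) + Pi.single j Complex.I) +
    fun _ => (η : ℂ) * Complex.I
  have hzc : Continuous z := by fun_prop
  have hcont : Continuous fun η : ℝ =>
      (aeval (z η) P * (starRingEnd ℂ) (aeval (z η) (pderiv i P))).im :=
    Complex.continuous_im.comp (((continuous_aeval_complex P).comp hzc).mul
      (Complex.continuous_conj.comp ((continuous_aeval_complex _).comp hzc)))
  have hlim : 0 ≤ (aeval (z 0) P * (starRingEnd ℂ) (aeval (z 0) (pderiv i P))).im := by
    refine ge_of_tendsto (hcont.continuousWithinAt (s := Set.Ioi 0) (x := 0)) ?_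
    filter_upwards [self_mem_nhdsWithin] with η hη
    refine hs.im_mul_conj_pderiv_nonneg hP i _ fun k => ?_
    have hη : 0 < η := hη
    obtain rfl | hk := eq_or_ne k j
    · simp [z]
      positivity
    · simpa [z, hk] using hη
  have hz0 : z 0 = (fun k => (x k : ℂ)) + Pi.single j Complex.I := by
    ext k
    simp [z]
  rw [hz0, hP.aeval_add_single, (hP.map_pderiv i).aeval_add_single] at hlim
  simp only [aeval_ofReal] at hlim
  simp at hlim
  linarith

/-- The derivative of a polynomial in the direction `eᵢ + eⱼ`. -/
noncomputable def pairDeriv {σ : Type*} (i j : σ) (P : MvPolynomial σ ℝ) : MvPolynomial σ ℝ :=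
  pderiv i P + pderiv j P

theorem MultiAffine.map_pairDeriv {σ : Type*} {P : MvPolynomial σ ℝ} (hP : MultiAffine P)
    (i j : σ) : MultiAffine (pairDeriv i j P) :=
  (hP.map_pderiv i).add (hP.map_pderiv j)

theorem MultiAffine.aeval_add_single_add_single {A : Type*} [CommRing A] [Algebra ℝ A]
    {P : MvPolynomial σ ℝ} (hP : MultiAffine P) (w : σ → A) (i j : σ) (s t : A) :
    aeval (w + Pi.single i s + Pi.single j t) P =
      aeval w P + s * aeval w (pderiv i P) + t * aeval w (pderiv j P) +
        s * t * aeval w (pderiv i (pderiv j P)) := by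
  rw [hP.aeval_add_single, hP.aeval_add_single, (hP.map_pderiv j).aeval_add_single]
  ring

theorem quadratic_eps_ne {e d : ℂ} {ε : ℝ} (hε : 0 < ε)
    (h : ∀ t : ℂ, 0 ≤ t.im → 1 + t * e + t ^ 2 * d ≠ 0) : e ≠ -(ε : ℂ) := by
  rintro rfl
  obtain ⟨s, hs⟩ := IsAlgClosed.exists_pow_nat_eq ((ε : ℂ) ^ 2 - 4 * d) (n := 2) (by norm_num)
  have key : ∀ μ ν : ℂ, μ + ν = ε → μ * ν = d → 0 < μ.im := by
    intro μ ν h1 h2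
    by_contra! hμ
    obtain rfl | h0 := eq_or_ne μ 0
    · simp only [zero_add, zero_mul] at h1 h2
      subst h1 h2
      refine h (1 / ε) ?_ ?_
      · rw [show (1 / (ε : ℂ)) = ((1 / ε : ℝ) : ℂ) by push_cast; rfl, Complex.ofReal_im]
      · have : (ε : ℂ) ≠ 0 := by exact_mod_cast hε.ne'
        field_simp
        ring
    · refine h μ⁻¹ ?_ ?_
      · rw [Complex.inv_im]
        exact div_nonneg (neg_nonneg.2 hμ) (Complex.normSq_nonneg _)
      · rw [← h2, ← h1]
        field_simp
        ring
  have e1 := key ((ε + s) / 2) ((ε - s) / 2) (by ring) (by linear_combination (-1 / 4) * hs)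
  have e2 := key ((ε - s) / 2) ((ε + s) / 2) (by ring) (by linear_combination (-1 / 4) * hs)
  have : (((ε : ℂ) + s) / 2 + (ε - s) / 2).im = 0 := by
    rw [show ((ε : ℂ) + s) / 2 + (ε - s) / 2 = ε by ring, Complex.ofReal_im]
  rw [Complex.add_im] at this
  linarith

theorem RealStable.pairDeriv_add {P : MvPolynomial σ ℝ} (hs : RealStable P) (hP : MultiAffine P)
    (i j : σ) {ε : ℝ} (hε : 0 < ε) : RealStable (pairDeriv i j P + C ε * P) := by
  intro z hz h0
  have hF := hs z hz
  refine quadratic_eps_ne (e := aeval z (pairDeriv i j P) / aeval z P)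
    (d := aeval z (pderiv i (pderiv j P)) / aeval z P) hε (fun t ht h => ?_) ?_
  · refine hs (z + Pi.single i t + Pi.single j t) (fun k => ?_) ?_
    · have h1 : 0 ≤ ((Pi.single i t : σ → ℂ) k).im := by
        by_cases hk : k = i <;> simp [hk, ht]
      have h2 : 0 ≤ ((Pi.single j t : σ → ℂ) k).im := by
        by_cases hk : k = j <;> simp [hk, ht]
      simp only [Pi.add_apply, Complex.add_im]
      linarith [hz k]
    · rw [hP.aeval_add_single_add_single]
      field_simp at h
      simp only [pairDeriv, map_add] at h
      linear_combination h
  · simp only [map_add, map_mul, aeval_C, Complex.coe_algebraMap] at h0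
    field_simp
    linear_combination h0

theorem continuous_eval_pderiv {P : ℝ → MvPolynomial σ ℝ} (hP : ∀ ε, MultiAffine (P ε))
    (hc : ∀ w, Continuous fun ε => eval w (P ε)) (i : σ) (w : σ → ℝ) :
    Continuous fun ε => eval w (pderiv i (P ε)) := by
  have : (fun ε => eval w (pderiv i (P ε))) =
      fun ε => eval (w + Pi.single i 1) (P ε) - eval w (P ε) := by
    ext ε
    rw [(hP ε).eval_add_single]
    ring
  rw [this]
  exact (hc _).sub (hc _)

theorem RealStable.rayleigh_foldr_pairDeriv {ι : Type*} {P : MvPolynomial σ ℝ} (hs : RealStable P)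
    (hP : MultiAffine P) (f g : ι → σ) (L : List ι) :
    Rayleigh (L.foldr (fun m => pairDeriv (f m) (g m)) P) := by
  let Q : ℝ → MvPolynomial σ ℝ := fun ε =>
    L.foldr (fun m R => pairDeriv (f m) (g m) R + C ε * R) P
  have hQ : (∀ ε, MultiAffine (Q ε)) ∧ (∀ ε, 0 < ε → RealStable (Q ε)) ∧
      (∀ w, Continuous fun ε => eval w (Q ε)) ∧
      Q 0 = L.foldr (fun m => pairDeriv (f m) (g m)) P := by
    induction L with
    | nil => exact ⟨fun _ => hP, fun _ _ => hs, fun w => by simpa [Q] using continuous_const, rfl⟩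
    | cons m L ih =>
      obtain ⟨h1, h2, h3, h4⟩ := ih
      refine ⟨fun ε => ((h1 ε).map_pairDeriv _ _).add ((h1 ε).C_mul ε),
        fun ε hε => (h2 ε hε).pairDeriv_add (h1 ε) _ _ hε, fun w => ?_, ?_⟩
      · simp only [Q, List.foldr_cons, map_add, map_mul, eval_C, pairDeriv]
        exact ((continuous_eval_pderiv h1 h3 _ w).add (continuous_eval_pderiv h1 h3 _ w)).add
          (continuous_id.mul (h3 w))
      · simp only [Q, List.foldr_cons, map_zero, zero_mul, add_zero]
  obtain ⟨h1, h2, h3, h4⟩ := hQ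
  rw [← h4]
  intro x i j
  have hd := continuous_eval_pderiv h1 h3
  have hdd := continuous_eval_pderiv (fun ε => (h1 ε).map_pderiv i) (hd i) j x
  refine le_of_tendsto_of_tendsto
    (((h3 x).mul hdd).continuousWithinAt (s := Set.Ioi 0) (x := 0))
    (((hd i x).mul (hd j x)).continuousWithinAt (s := Set.Ioi 0) (x := 0)) ?_
  filter_upwards [self_mem_nhdsWithin] with ε hε
  exact (h2 ε hε).rayleigh (h1 ε) x i j

end Stability

/-- `P` is positive on the orthant `w + ℝ₊^σ`. -/
def PosAbove {σ : Type*} (P : MvPolynomial σ ℝ) (w : σ → ℝ) : Prop :=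
  ∀ t : σ → ℝ, (∀ i, 0 ≤ t i) → 0 < eval (w + t) P

section Barrier

variable {σ : Type*} [Fintype σ] [DecidableEq σ]

theorem nonneg_of_forall_affine_nonneg {a b : ℝ} (h : ∀ s : ℝ, 0 ≤ s → 0 ≤ a + s * b) :
    0 ≤ b := by
  by_contra! hb
  have hs := h ((|a| + 1) / -b) (by have := abs_nonneg a; have := neg_pos.2 hb; positivity)
  have : (|a| + 1) / -b * b = -(|a| + 1) := by
    rw [div_neg, neg_mul, div_mul_cancel₀ _ hb.ne]
  rw [this] at hs
  linarith [le_abs_self a]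

theorem single_nonneg_apply {σ : Type*} [DecidableEq σ] {s : ℝ} (hs : 0 ≤ s) (k i : σ) :
    0 ≤ (Pi.single k s : σ → ℝ) i := by
  by_cases h : i = k <;> simp [h, hs]

theorem apply_add_le_of_coordinatewise {ψ : (σ → ℝ) → ℝ} {w : σ → ℝ}
    (h : ∀ u : σ → ℝ, (∀ i, 0 ≤ u i) → ∀ (k : σ) (s : ℝ), 0 ≤ s →
      ψ (w + u + Pi.single k s) ≤ ψ (w + u))
    {t : σ → ℝ} (ht : ∀ i, 0 ≤ t i) : ψ (w + t) ≤ ψ w := by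
  have key : ∀ S : Finset σ, ψ (w + ∑ k ∈ S, Pi.single k (t k)) ≤ ψ w := by
    intro S
    induction S using Finset.induction_on with
    | empty => simp
    | insert k S hk ih =>
      rw [Finset.sum_insert hk, add_comm _ (∑ x ∈ S, _), ← add_assoc]
      refine (h _ (fun i => ?_) k _ (ht k)).trans ih
      rw [Finset.sum_apply]
      exact Finset.sum_nonneg fun l _ => single_nonneg_apply (ht l) l i
  simpa [Finset.univ_sum_single] using key Finset.univ

theorem eq_zero_of_eval_orthant_eq_zero {σ : Type*} {Q : MvPolynomial σ ℝ} {w : σ → ℝ}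
    (h : ∀ t : σ → ℝ, (∀ i, 0 ≤ t i) → eval (w + t) Q = 0) : Q = 0 := by
  refine funext_set (fun i => Set.Ici (w i)) (fun i => Set.Ici_infinite _) fun x hx => ?_
  have := h (x - w) fun i => sub_nonneg.2 (hx i trivial)
  simpa using this

theorem PosAbove.add {σ : Type*} {P : MvPolynomial σ ℝ} {w t : σ → ℝ} (h : PosAbove P w)
    (ht : ∀ i, 0 ≤ t i) : PosAbove P (w + t) := by
  intro u hu
  rw [add_assoc]
  exact h _ fun i => add_nonneg (ht i) (hu i)

theorem PosAbove.eval_pos {σ : Type*} {P : MvPolynomial σ ℝ} {w : σ → ℝ} (h : PosAbove P w) :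
    0 < eval w P := by
  simpa using h 0 fun _ => le_rfl

theorem PosAbove.eval_pderiv_nonneg {P : MvPolynomial σ ℝ} {w : σ → ℝ} (h : PosAbove P w)
    (hP : MultiAffine P) (i : σ) : 0 ≤ eval w (pderiv i P) := by
  refine nonneg_of_forall_affine_nonneg (a := eval w P) fun s hs => ?_
  rw [← hP.eval_add_single]
  exact (h _ (single_nonneg_apply hs i)).le

theorem PosAbove.eval_pderiv_pderiv_nonneg {P : MvPolynomial σ ℝ} {w : σ → ℝ}
    (h : PosAbove P w) (hP : MultiAffine P) (i j : σ) :
    0 ≤ eval w (pderiv i (pderiv j P)) := by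
  refine nonneg_of_forall_affine_nonneg (a := eval w (pderiv j P)) fun s hs => ?_
  rw [← (hP.map_pderiv j).eval_add_single]
  exact (h.add (single_nonneg_apply hs i)).eval_pderiv_nonneg hP j

theorem PosAbove.pderiv_div_antitone {P : MvPolynomial σ ℝ} {w : σ → ℝ} (h : PosAbove P w)
    (hP : MultiAffine P) (hR : Rayleigh P) (i : σ) {t : σ → ℝ} (ht : ∀ i, 0 ≤ t i) :
    eval (w + t) (pderiv i P) / eval (w + t) P ≤ eval w (pderiv i P) / eval w P := by
  refine apply_add_le_of_coordinatewise (ψ := fun v => eval v (pderiv i P) / eval v P)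
    (fun u hu k s hs => ?_) ht
  have h0 := h.add hu
  have h1 := h0.add (single_nonneg_apply hs k)
  rw [div_le_div_iff₀ h1.eval_pos h0.eval_pos, hP.eval_add_single,
    (hP.map_pderiv i).eval_add_single]
  have := mul_le_mul_of_nonneg_left (hR (w + u) i k) hs
  linarith

/-- If `W(t) = f₀'(t) f₁(t) - f₀(t) f₁'(t)` is nonnegative for the quadratics
`fᵢ = Aᵢ + Eᵢ t + Dᵢ t²`, then `f₁ / f₀` has at `0` the convexity needed for the barrier bound. -/
theorem quadratic_barrier {A₀ E₀ D₀ A₁ E₁ D₁ δ : ℝ} (hA : 0 < A₀) (hE : 0 < E₀) (hD : 0 ≤ D₀)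
    (hδ : 0 ≤ δ) (hδA : δ * E₀ ≤ A₀)
    (hW : ∀ t : ℝ, 0 ≤ (E₀ + 2 * t * D₀) * (A₁ + t * E₁ + t ^ 2 * D₁) -
      (A₀ + t * E₀ + t ^ 2 * D₀) * (E₁ + 2 * t * D₁)) :
    (E₁ - δ * D₁) * A₀ ≤ (E₀ - δ * D₀) * A₁ := by
  have hdisc : discrim (D₀ * E₁ - E₀ * D₁) (2 * (D₀ * A₁ - A₀ * D₁)) (E₀ * A₁ - A₀ * E₁) ≤ 0 :=
    discrim_le_zero fun t => by
      have := hW t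
      linarith
  have hW0 : 0 ≤ E₀ * A₁ - A₀ * E₁ := by
    have := hW 0
    linarith
  set w := D₀ * A₁ - A₀ * D₁ with hw
  set W₀ := E₀ * A₁ - A₀ * E₁ with hW₀
  suffices δ * w ≤ W₀ by
    rw [hw, hW₀] at this
    linarith
  obtain hw0 | hw0 := le_or_gt w 0
  · exact (mul_nonpos_of_nonneg_of_nonpos hδ hw0).trans hW0
  have hAw : A₀ * w ≤ E₀ * W₀ := by
    have h2 : A₀ * (D₀ * E₁ - E₀ * D₁) = E₀ * w - D₀ * W₀ := by
      rw [hw, hW₀]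
      ring
    have h3 : w ^ 2 ≤ (D₀ * E₁ - E₀ * D₁) * W₀ := by
      rw [discrim] at hdisc
      linarith
    have h4 : A₀ * w ^ 2 ≤ (E₀ * w - D₀ * W₀) * W₀ := by
      rw [← h2, mul_assoc]
      exact mul_le_mul_of_nonneg_left h3 hA.le
    have h5 : 0 ≤ D₀ * W₀ * W₀ := by positivity
    refine le_of_mul_le_mul_right ?_ hw0
    linarith
  refine le_of_mul_le_mul_left ?_ hE
  calc E₀ * (δ * w) = (δ * E₀) * w := by ring
    _ ≤ A₀ * w := mul_le_mul_of_nonneg_right hδA hw0.le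
    _ ≤ E₀ * W₀ := hAw

theorem MultiAffine.eval_pairDeriv_sub_single {P : MvPolynomial σ ℝ} (hP : MultiAffine P)
    (i j : σ) (v : σ → ℝ) (δ : ℝ) :
    eval (v - Pi.single i δ) (pairDeriv i j P) =
      eval v (pairDeriv i j P) - δ * eval v (pderiv i (pderiv j P)) := by
  rw [sub_eq_add_neg, ← Pi.single_neg, (hP.map_pairDeriv i j).eval_add_single]
  simp only [pairDeriv, map_add, hP.pderiv_pderiv_self, zero_add]
  ring

theorem PosAbove.eval_pairDeriv_pos {P : MvPolynomial σ ℝ} {w : σ → ℝ} (h : PosAbove P w)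
    (hP : MultiAffine P) (hR : Rayleigh P) {i j : σ} (hne : pairDeriv i j P ≠ 0) :
    0 < eval w (pairDeriv i j P) := by
  have hi := h.eval_pderiv_nonneg hP i
  have hj := h.eval_pderiv_nonneg hP j
  rw [pairDeriv, map_add]
  refine lt_of_le_of_ne (add_nonneg hi hj) fun h0 => hne ?_
  refine eq_zero_of_eval_orthant_eq_zero (w := w) fun t ht => ?_
  have key : ∀ k, eval w (pderiv k P) = 0 → eval (w + t) (pderiv k P) = 0 := by
    intro k hk
    have h1 := h.pderiv_div_antitone hP hR k ht
    rw [hk, zero_div, div_le_iff₀ (h t ht), zero_mul] at h1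
    exact le_antisymm h1 ((h.add ht).eval_pderiv_nonneg hP k)
  rw [pairDeriv, map_add, key i (by linarith), key j (by linarith), add_zero]

theorem PosAbove.map_pairDeriv {P : MvPolynomial σ ℝ} {w : σ → ℝ} (h : PosAbove P w)
    (hP : MultiAffine P) (hR : Rayleigh P) {i j : σ} (hne : pairDeriv i j P ≠ 0) {φ : ℝ}
    (hφ : 0 < φ) (hle : eval w (pairDeriv i j P) ≤ φ * eval w P) :
    PosAbove (pairDeriv i j P) (w - Pi.single i (1 / φ)) := by
  intro t ht
  rw [sub_add_eq_add_sub, hP.eval_pairDeriv_sub_single]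
  have ht' := h.add ht
  have hA := ht'.eval_pos
  have hE := ht'.eval_pairDeriv_pos hP hR hne
  have hD := ht'.eval_pderiv_pderiv_nonneg hP i j
  have hB := ht'.eval_pderiv_nonneg hP i
  have hC := ht'.eval_pderiv_nonneg hP j
  have hEA : eval (w + t) (pairDeriv i j P) ≤ φ * eval (w + t) P := by
    rw [← div_le_iff₀ hA]
    rw [← div_le_iff₀ h.eval_pos] at hle
    refine le_trans ?_ hle
    simp only [pairDeriv, map_add, add_div]
    exact add_le_add (h.pderiv_div_antitone hP hR i ht) (h.pderiv_div_antitone hP hR j ht)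
  have hAD := hR (w + t) j i
  have hEdef : eval (w + t) (pairDeriv i j P) =
      eval (w + t) (pderiv i P) + eval (w + t) (pderiv j P) := map_add _ _ _
  generalize eval (w + t) (pairDeriv i j P) = E at *
  generalize eval (w + t) P = A at *
  generalize eval (w + t) (pderiv i (pderiv j P)) = D at *
  generalize eval (w + t) (pderiv i P) = B at *
  generalize eval (w + t) (pderiv j P) = C at *
  have h1 : D * E < φ * E * E := by
    have : D * E ≤ φ * (B * C) := by
      calc D * E ≤ D * (φ * A) := mul_le_mul_of_nonneg_left hEA hD
        _ = φ * (A * D) := by ring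
        _ ≤ φ * (B * C) := mul_le_mul_of_nonneg_left (by linarith) hφ.le
    have : B * C < E * E := by
      subst hEdef
      nlinarith [mul_pos hE hE, mul_nonneg hB hC]
    nlinarith
  have h2 : D < φ * E := lt_of_mul_lt_mul_right h1 hE.le
  rw [one_div, sub_pos, inv_mul_lt_iff₀ hφ]
  exact h2

theorem PosAbove.pderiv_pairDeriv_le {P : MvPolynomial σ ℝ} {w : σ → ℝ} (h : PosAbove P w)
    (hP : MultiAffine P) (hR : Rayleigh P) {i j : σ} (hne : pairDeriv i j P ≠ 0) {φ : ℝ}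
    (hφ : 0 < φ) (hle : eval w (pairDeriv i j P) ≤ φ * eval w P) (k : σ) :
    eval (w - Pi.single i (1 / φ)) (pderiv k (pairDeriv i j P)) * eval w P ≤
      eval (w - Pi.single i (1 / φ)) (pairDeriv i j P) * eval w (pderiv k P) := by
  have hcomm : pderiv k (pairDeriv i j P) = pairDeriv i j (pderiv k P) := by
    simp only [pairDeriv, map_add, pderiv_pderiv_comm _ k]
  rw [hcomm, hP.eval_pairDeriv_sub_single, (hP.map_pderiv k).eval_pairDeriv_sub_single]
  refine quadratic_barrier h.eval_pos (h.eval_pairDeriv_pos hP hR hne)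
    (h.eval_pderiv_pderiv_nonneg hP i j) (by positivity) ?_ fun t => ?_
  · rw [one_div, inv_mul_le_iff₀ hφ]
    exact hle
  · have hi := hR (w + Pi.single i t + Pi.single j t) i k
    have hj := hR (w + Pi.single i t + Pi.single j t) j k
    have expand : ∀ {Q : MvPolynomial σ ℝ}, MultiAffine Q →
        eval (w + Pi.single i t + Pi.single j t) Q = eval w Q + t * eval w (pderiv i Q) +
          t * eval w (pderiv j Q) + t * t * eval w (pderiv i (pderiv j Q)) :=
      fun hQ => hQ.aeval_add_single_add_single w i j t t
    simp only [pderiv_pderiv_comm _ k] at hi hj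
    rw [expand hP, expand (hP.map_pderiv i), expand (hP.map_pderiv k),
      expand ((hP.map_pderiv k).map_pderiv i)] at hi
    rw [expand hP, expand (hP.map_pderiv j), expand (hP.map_pderiv k),
      expand ((hP.map_pderiv k).map_pderiv j)] at hj
    simp only [pderiv_pderiv_comm _ j i, hP.pderiv_pderiv_self,
      (hP.map_pderiv k).pderiv_pderiv_self, (hP.map_pderiv _).pderiv_pderiv_self,
      ((hP.map_pderiv k).map_pderiv j).pderiv_pderiv_self, map_zero] at hi hj
    simp only [pairDeriv, map_add]
    linarith

theorem PosAbove.foldr_pairDeriv {ι : Type*} {P : MvPolynomial σ ℝ} {w : σ → ℝ}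
    (h : PosAbove P w) (hP : MultiAffine P) {f g : ι → σ}
    (hR : ∀ L : List ι, Rayleigh (L.foldr (fun m => pairDeriv (f m) (g m)) P))
    {φ : ι → ℝ} (hφ : ∀ m, 0 < φ m)
    (hle : ∀ m, eval w (pairDeriv (f m) (g m) P) ≤ φ m * eval w P) (L : List ι)
    (hne : L.foldr (fun m => pairDeriv (f m) (g m)) P ≠ 0) :
    PosAbove (L.foldr (fun m => pairDeriv (f m) (g m)) P)
      (w - (L.map fun m => Pi.single (f m) (1 / φ m)).sum) := by
  suffices H : PosAbove (L.foldr (fun m => pairDeriv (f m) (g m)) P)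
        (w - (L.map fun m => Pi.single (f m) (1 / φ m)).sum) ∧
      MultiAffine (L.foldr (fun m => pairDeriv (f m) (g m)) P) ∧
      ∀ m, eval (w - (L.map fun m => Pi.single (f m) (1 / φ m)).sum)
          (pairDeriv (f m) (g m) (L.foldr (fun m => pairDeriv (f m) (g m)) P)) ≤
        φ m * eval (w - (L.map fun m => Pi.single (f m) (1 / φ m)).sum)
          (L.foldr (fun m => pairDeriv (f m) (g m)) P) from H.1
  induction L with
  | nil => simpa using ⟨h, hP, hle⟩
  | cons l L ih =>
    have hRL := hR L
    simp only [List.foldr_cons, List.map_cons, List.sum_cons] at hne ⊢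
    rw [sub_add_eq_sub_sub_swap]
    set Q := L.foldr (fun m => pairDeriv (f m) (g m)) P
    set v := w - (L.map fun m => Pi.single (f m) (1 / φ m)).sum
    obtain ⟨h1, h2, h3⟩ := ih fun h0 => hne (by rw [h0]; simp [pairDeriv])
    have hpos := h1.map_pairDeriv h2 hRL hne (hφ l) (h3 l)
    refine ⟨hpos, h2.map_pairDeriv _ _, fun m => ?_⟩
    have hf := h1.pderiv_pairDeriv_le h2 hRL hne (hφ l) (h3 l) (f m)
    have hg := h1.pderiv_pairDeriv_le h2 hRL hne (hφ l) (h3 l) (g m)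
    have hm := mul_le_mul_of_nonneg_left (h3 m) hpos.eval_pos.le
    refine le_of_mul_le_mul_right ?_ h1.eval_pos
    rw [pairDeriv, map_add, add_mul]
    rw [pairDeriv.eq_def (f m), map_add] at hm
    linarith

end Barrier

section Flip

variable {σ : Type*} [Fintype σ]

theorem MultiAffine.flipPoly (q : MvPolynomial σ ℝ) : MultiAffine (flipPoly q) := by
  rw [multiAffine_iff_degreeOf]
  intro i
  refine (degreeOf_sum_le _ _ _).trans (Finset.sup_le fun m _ => ?_)
  obtain h | h := eq_or_ne (coeff m q) 0
  · simp [h]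
  · rw [degreeOf_monomial_eq _ _ h]
    simp

theorem aeval_flipPoly {q : MvPolynomial σ ℝ} (hq : MultiAffine q) {z : σ → ℂ}
    (hz : ∀ i, z i ≠ 0) :
    aeval z (flipPoly q) = (∏ i, z i) * aeval (fun i => (z i)⁻¹) q := by
  rw [aeval_def (S₁ := ℂ) (f := fun i => (z i)⁻¹), eval₂_eq', flipPoly, map_sum, Finset.mul_sum]
  refine Finset.sum_congr rfl fun m hm => ?_
  rw [aeval_monomial, Finsupp.prod_fintype _ _ (by simp), mul_left_comm, ← Finset.prod_mul_distrib]
  congr 1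
  refine Finset.prod_congr rfl fun i _ => ?_
  have h1 := hq m hm i
  simp only [Finsupp.equivFunOnFinite_symm_apply_apply]
  interval_cases m i
  · simp
  · simp [hz i]

theorem aeval_conj {σ : Type*} [Fintype σ] (q : MvPolynomial σ ℝ) (z : σ → ℂ) :
    aeval (fun i => (starRingEnd ℂ) (z i)) q = (starRingEnd ℂ) (aeval z q) := by
  simp [aeval_def, eval₂_eq', map_sum, map_prod]

theorem RealStable.flipPoly {q : MvPolynomial σ ℝ} (hs : RealStable q) (hq : MultiAffine q) :
    RealStable (flipPoly q) := by
  intro z hz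
  have hz0 : ∀ i, z i ≠ 0 := fun i h => by simpa [h] using hz i
  rw [aeval_flipPoly hq hz0]
  refine mul_ne_zero (Finset.prod_ne_zero_iff.2 fun i _ => hz0 i) fun h => ?_
  refine hs (fun i => (starRingEnd ℂ) (z i)⁻¹) (fun i => ?_) ?_
  · rw [Complex.conj_im, Complex.inv_im, neg_div, neg_neg]
    exact div_pos (hz i) (Complex.normSq_pos.2 (hz0 i))
  · rw [aeval_conj, h, map_zero]

end Flip

section Symbol

variable {ι : Type*} [Fintype ι] [DecidableEq ι]

theorem derivation_prod_eq {R : Type*} [CommRing R] [Algebra ℝ R] (D : Derivation ℝ R R)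
    (v : ι → R) (i : ι) (h : ∀ j ≠ i, D (v j) = 0) :
    D (∏ j, v j) = D (v i) * ∏ j ∈ Finset.univ.erase i, v j := by
  have h0 : D (∏ j ∈ Finset.univ.erase i, v j) = 0 := by
    refine Finset.prod_induction v (fun r => D r = 0) (fun a b ha hb => ?_) (by simp)
      fun j hj => h j (Finset.ne_of_mem_erase hj)
    rw [D.leibniz, ha, hb, smul_zero, smul_zero, add_zero]
  rw [← Finset.mul_prod_erase _ _ (Finset.mem_univ i), D.leibniz, h0, smul_zero, zero_add,
    smul_eq_mul, mul_comm]

theorem foldr_prod_eq {R : Type*} [CommRing R] (T : ι → R → R) (u u' : ι → R)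
    (hT : ∀ (i : ι) (v : ι → R), (∀ j, v j = u j ∨ v j = u' j) → v i = u i →
      T i (∏ j, v j) = u' i * ∏ j ∈ Finset.univ.erase i, v j)
    {L : List ι} (hL : L.Nodup) :
    L.foldr T (∏ j, u j) = ∏ j, if j ∈ L then u' j else u j := by
  induction L with
  | nil => simp
  | cons i L ih =>
    rw [List.nodup_cons] at hL
    rw [List.foldr_cons, ih hL.2, hT i _ (fun j => by by_cases h : j ∈ L <;> simp [h])
      (by simp [hL.1]),
      ← Finset.mul_prod_erase (s := Finset.univ) (a := i) (h := Finset.mem_univ i)]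
    congr 1
    · simp
    · refine Finset.prod_congr rfl fun j hj => ?_
      simp [Finset.ne_of_mem_erase hj]

theorem exists_linearMap_foldr {ι R : Type*} [AddCommGroup R] [Module ℝ R] (T : ι → R →ₗ[ℝ] R)
    (L : List ι) : ∃ Φ : R →ₗ[ℝ] R, ∀ P, L.foldr (fun i g => T i g) P = Φ P := by
  induction L with
  | nil => exact ⟨LinearMap.id, fun _ => rfl⟩
  | cons i L ih =>
    obtain ⟨Φ, hΦ⟩ := ih
    exact ⟨T i ∘ₗ Φ, fun P => by simp [hΦ]⟩

theorem exists_linearMap_applyMon {ι : Type*} [Fintype ι] (m : ι →₀ ℕ) :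
    ∃ Φ : MvPolynomial ι ℝ →ₗ[ℝ] MvPolynomial ι ℝ, ∀ P, applyMon m P = Φ P := by
  obtain ⟨Φ, hΦ⟩ := exists_linearMap_foldr
    (fun i : ι => ((pderiv i).toLinearMap : Module.End ℝ (MvPolynomial ι ℝ)) ^ m i)
    Finset.univ.toList
  refine ⟨Φ, fun P => ?_⟩
  rw [← hΦ, applyMon]
  simp only [Module.End.pow_apply]
  rfl

theorem applyMon_prod (m : ι →₀ ℕ) (hm : ∀ i, m i ≤ 1) (α : ι → ℕ) :
    applyMon m (∏ i, (X i : MvPolynomial ι ℝ) ^ α i) =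
      ∏ i, (fun h => pderiv i h)^[m i] (X i ^ α i) := by
  rw [applyMon, foldr_prod_eq _ _ (fun i => (fun h => pderiv i h)^[m i] (X i ^ α i)) _
    (Finset.nodup_toList _)]
  · simp
  · intro i v hv hvi
    have h1 := hm i
    interval_cases h : m i
    · simp [← hvi, Finset.mul_prod_erase]
    · simp only [Function.iterate_one]
      rw [derivation_prod_eq _ _ i, hvi]
      intro j hj
      have hX : pderiv i ((X j : MvPolynomial ι ℝ) ^ α j) = 0 := by
        simp [pderiv_X_of_ne hj]
      obtain hj' | hj' := hv j
      · rw [hj', hX]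
      · rw [hj']
        have h2 := hm j
        interval_cases m j
        · exact hX
        · rw [Function.iterate_one, pderiv_pderiv_comm, hX, map_zero]

theorem foldr_pairDeriv_prod (α β : ι → ℕ) :
    Finset.univ.toList.foldr (fun m : ι => pairDeriv (Sum.inl m) (Sum.inr m))
        (∏ i, ((X (Sum.inl i) : MvPolynomial (ι ⊕ ι) ℝ) ^ α i * X (Sum.inr i) ^ β i)) =
      ∏ i, pairDeriv (Sum.inl i) (Sum.inr i) (X (Sum.inl i) ^ α i * X (Sum.inr i) ^ β i) := by
  rw [foldr_prod_eq _ _ (fun i => pairDeriv (Sum.inl i) (Sum.inr i)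
    (X (Sum.inl i) ^ α i * X (Sum.inr i) ^ β i)) _ (Finset.nodup_toList _)]
  · simp
  · intro i v hv hvi
    rw [← hvi]
    refine derivation_prod_eq (pderiv (Sum.inl i) + pderiv (Sum.inr i)) v i fun j hj => ?_
    have hl : pderiv (Sum.inl i) ((X (Sum.inl j) : MvPolynomial (ι ⊕ ι) ℝ) ^ α j *
        X (Sum.inr j) ^ β j) = 0 := by
      simp [hj]
    have hr : pderiv (Sum.inr i) ((X (Sum.inl j) : MvPolynomial (ι ⊕ ι) ℝ) ^ α j *
        X (Sum.inr j) ^ β j) = 0 := by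
      simp [hj]
    obtain hj' | hj' := hv j
    · rw [hj', Derivation.add_apply, hl, hr, add_zero]
    · rw [hj', Derivation.add_apply, pairDeriv, map_add, map_add,
        pderiv_pderiv_comm _ (Sum.inl i), pderiv_pderiv_comm _ (Sum.inl i),
        pderiv_pderiv_comm _ (Sum.inr i), pderiv_pderiv_comm _ (Sum.inr i), hl, hr]
      simp

theorem exists_linearMap_foldr_pairDeriv {ι σ : Type*} (f g : ι → σ) (L : List ι) :
    ∃ Φ : MvPolynomial σ ℝ →ₗ[ℝ] MvPolynomial σ ℝ,
      ∀ P, L.foldr (fun m => pairDeriv (f m) (g m)) P = Φ P :=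
  exists_linearMap_foldr
    (fun m => (pderiv (f m)).toLinearMap + (pderiv (g m)).toLinearMap) L

theorem monomial_eq_smul_prod {ι : Type*} [Fintype ι] (m : ι →₀ ℕ) (c : ℝ) :
    (monomial m c : MvPolynomial ι ℝ) = c • ∏ i, X i ^ m i := by
  rw [monomial_eq, Finsupp.prod_fintype _ _ (by simp), C_mul']

/-- The symbol identity `(q(∂)p)(x + y) = ∏ₘ (∂_{xₘ} + ∂_{yₘ}) p(x) q̄(y)`. -/
theorem eval_foldr_pairDeriv_mul_flipPoly {p q : MvPolynomial ι ℝ} (hp : MultiAffine p)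
    (hq : MultiAffine q) (x y : ι → ℝ) :
    eval (Sum.elim x y) (Finset.univ.toList.foldr
        (fun m : ι => pairDeriv (Sum.inl m) (Sum.inr m))
        (rename Sum.inl p * rename Sum.inr (flipPoly q))) = eval (x + y) (diffOp q p) := by
  obtain ⟨Φ, hΦ⟩ := exists_linearMap_foldr_pairDeriv (Sum.inl : ι → ι ⊕ ι) Sum.inr
    Finset.univ.toList
  rw [hΦ, diffOp, flipPoly, map_sum, map_sum, Finset.mul_sum, map_sum, map_sum]
  refine Finset.sum_congr rfl fun m hm => ?_
  obtain ⟨Ψ, hΨ⟩ := exists_linearMap_applyMon m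
  rw [hΨ]
  conv_lhs => rw [p.as_sum]
  conv_rhs => rw [p.as_sum]
  simp only [map_sum, Finset.sum_mul, Finset.smul_sum]
  refine Finset.sum_congr rfl fun α hα => ?_
  rw [monomial_eq_smul_prod, monomial_eq_smul_prod, Ψ.map_smul, ← hΨ, applyMon_prod m (hq m hm),
    map_smul (rename Sum.inl), map_smul (rename Sum.inr), map_prod,
    map_prod, smul_mul_smul_comm, ← Finset.prod_mul_distrib, Φ.map_smul]
  simp only [map_pow, rename_X]
  rw [← hΦ, foldr_pairDeriv_prod, smul_eval, smul_eval, smul_eval, map_prod, map_prod,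
    mul_comm (coeff α p), mul_assoc]
  congr 2
  refine Finset.prod_congr rfl fun i _ => ?_
  have h1 := hp α hα i
  have h2 := hq m hm i
  simp only [Finsupp.equivFunOnFinite_symm_apply_apply]
  interval_cases α i <;> interval_cases m i <;> simp [pairDeriv]
  ring

end Symbol

theorem AboveRoots.eval_mul_eval_pos {σ : Type*} {p : MvPolynomial σ ℝ} {a : σ → ℝ}
    (h : AboveRoots p a) {t : σ → ℝ} (ht : ∀ i, 0 ≤ t i) :
    0 < eval a p * eval (a + t) p := by
  by_contra! hle
  let g : ℝ → ℝ := fun s => eval (a + s • t) p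
  have hg : Continuous g := (continuous_eval p).comp (by fun_prop)
  have h0 : (0 : ℝ) ∈ Set.uIcc (g 0) (g 1) := by
    rw [Set.mem_uIcc]
    simp only [g, zero_smul, add_zero, one_smul]
    obtain h | h := mul_nonpos_iff.1 hle
    · exact Or.inr ⟨h.2, h.1⟩
    · exact Or.inl h
  obtain ⟨s, hs, hs0⟩ := intermediate_value_uIcc hg.continuousOn h0
  rw [Set.uIcc_of_le zero_le_one] at hs
  exact h (s • t) (fun i => mul_nonneg hs.1 (ht i)) hs0

theorem pderiv_rename_eq_zero {σ τ : Type*} {f : σ → τ} {k : τ} (hk : ∀ i, f i ≠ k)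
    (P : MvPolynomial σ ℝ) : pderiv k (rename f P) = 0 := by
  classical
  refine pderiv_eq_zero_of_notMem_vars fun h => ?_
  obtain ⟨i, -, hi⟩ := Finset.mem_image.1 (vars_rename f P h)
  exact hk i hi

/-- **An analytical Lieb–Sokal lemma.** If `a` is above the roots of `p` and `b` is
above the roots of the flip `q̄`, then `a + b - (1/φ₁,…,1/φₙ)` is above the roots of
`q(∂)p`, where `φᵢ = (∂ᵢp/p)(a) + (∂ᵢq̄/q̄)(b)`. -/
theorem analytical_lieb_sokal {n : ℕ} (p q : MvPolynomial (Fin n) ℝ)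
    (hp0 : p ≠ 0) (hq0 : q ≠ 0) (hps : RealStable p) (hqs : RealStable q)
    (hpm : MultiAffine p) (hqm : MultiAffine q)
    (hr0 : diffOp q p ≠ 0)
    (a b : Fin n → ℝ) (ha : AboveRoots p a) (hb : AboveRoots (flipPoly q) b)
    (φ : Fin n → ℝ)
    (hφ : ∀ i, φ i =
      MvPolynomial.eval a (MvPolynomial.pderiv i p) / MvPolynomial.eval a p +
        MvPolynomial.eval b (MvPolynomial.pderiv i (flipPoly q)) /
          MvPolynomial.eval b (flipPoly q))
    (hφpos : ∀ i, 0 < φ i) :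
    AboveRoots (diffOp q p) (fun i => a i + b i - 1 / φ i) := by
  set w : Fin n ⊕ Fin n → ℝ := Sum.elim a b with hw
  set Q := flipPoly q
  have hpa : eval a p ≠ 0 := by simpa using ha 0 fun _ => le_rfl
  have hqb : eval b Q ≠ 0 := by simpa using hb 0 fun _ => le_rfl
  obtain ⟨c, hc⟩ : ∃ c, c = eval a p * eval b Q := ⟨_, rfl⟩
  have hc0 : c ≠ 0 := hc ▸ mul_ne_zero hpa hqb
  set G : MvPolynomial (Fin n ⊕ Fin n) ℝ := rename Sum.inl p * rename Sum.inr Q with hG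
  have hGm : MultiAffine (C c * G) :=
    (hpm.rename_inl_mul_rename_inr (MultiAffine.flipPoly q)).C_mul c
  have hGs : RealStable (C c * G) := by
    intro z hz
    rw [hG, map_mul, map_mul, aeval_C, aeval_rename, aeval_rename]
    refine mul_ne_zero (by simpa using hc0) (mul_ne_zero (hps _ fun i => hz _) ?_)
    exact hqs.flipPoly hqm _ fun i => hz _
  have hpos : PosAbove (C c * G) w := by
    intro t ht
    have h1 := ha.eval_mul_eval_pos (t := t ∘ Sum.inl) fun i => ht _
    have h2 := hb.eval_mul_eval_pos (t := t ∘ Sum.inr) fun i => ht _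
    rw [hG, map_mul, map_mul, eval_C, eval_rename, eval_rename]
    have e1 : (w + t) ∘ Sum.inl = a + t ∘ Sum.inl := rfl
    have e2 : (w + t) ∘ Sum.inr = b + t ∘ Sum.inr := rfl
    rw [e1, e2, hc, mul_mul_mul_comm]
    exact mul_pos h1 h2
  have hle : ∀ m, eval w (pairDeriv (Sum.inl m) (Sum.inr m) (C c * G)) ≤
      φ m * eval w (C c * G) := by
    intro m
    refine le_of_eq ?_
    rw [hφ m, pairDeriv, pderiv_C_mul, pderiv_C_mul, hG, pderiv_mul, pderiv_mul,
      pderiv_rename_eq_zero (f := Sum.inr) (k := Sum.inl m) (by simp) Q,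
      pderiv_rename_eq_zero (f := Sum.inl) (k := Sum.inr m) (by simp) p,
      pderiv_rename Sum.inl_injective, pderiv_rename Sum.inr_injective]
    simp only [map_add, map_mul, eval_C, eval_rename, hw, Sum.elim_comp_inl, Sum.elim_comp_inr,
      mul_zero, zero_mul, add_zero, zero_add]
    field_simp
  have heval : ∀ x y : Fin n → ℝ, eval (Sum.elim x y) (Finset.univ.toList.foldr
      (fun m : Fin n => pairDeriv (Sum.inl m) (Sum.inr m)) (C c * G)) =
        c * eval (x + y) (diffOp q p) := by
    intro x y
    obtain ⟨Φ, hΦ⟩ := exists_linearMap_foldr_pairDeriv (Sum.inl : Fin n → Fin n ⊕ Fin n) Sum.inr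
      Finset.univ.toList
    rw [← eval_foldr_pairDeriv_mul_flipPoly hpm hqm, hΦ, hΦ, C_mul', map_smul, smul_eval]
  have hne : Finset.univ.toList.foldr
      (fun m : Fin n => pairDeriv (Sum.inl m) (Sum.inr m)) (C c * G) ≠ 0 := by
    intro h0
    refine hr0 (MvPolynomial.funext fun x => ?_)
    have := heval x 0
    rw [h0, map_zero, add_zero] at this
    rw [map_zero]
    exact (mul_eq_zero.1 this.symm).resolve_left hc0
  have hfin := hpos.foldr_pairDeriv hGm
    (fun L => hGs.rayleigh_foldr_pairDeriv hGm Sum.inl Sum.inr L) hφpos hle _ hne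
  intro t ht
  have hval := hfin (Sum.elim t 0) (by rintro (i | i) <;> simp [ht])
  have hpt : w - ((Finset.univ.toList).map fun m : Fin n =>
      (Pi.single (Sum.inl m) (1 / φ m) : Fin n ⊕ Fin n → ℝ)).sum + Sum.elim t 0 =
        Sum.elim (fun i => a i - 1 / φ i + t i) b := by
    rw [Finset.sum_map_toList]
    ext (i | i)
    · simp [hw, Finset.sum_apply, Pi.single_apply]
    · simp [hw, Finset.sum_apply]
  rw [hpt, heval] at hval
  have harg : (fun i => a i - 1 / φ i + t i) + b = (fun i => a i + b i - 1 / φ i) + t := by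
    ext i
    simp only [Pi.add_apply]
    ring
  rw [harg] at hval
  exact right_ne_zero_of_mul hval.ne'
end

section
/- Let p ∈ ℝ[z_1,…,z_n] be a nonzero real stable polynomial and let a ∈ ℝ^n be above the roots of p. Let v and w be unit vectors in ℝ^n with all coordinates nonnegative. Let Φ^v_p denote the function x ↦ (D_v p)(x)/p(x), defined on a neighborhood of a (p(a) ≠ 0 since a is above the roots). Then: (1) Φ^v_p(a) ≥ 0; (2) the directional derivative D_w(Φ^v_p)(a) ≤ 0; (3) the second directional derivative D_w^2(Φ^v_p)(a) ≥ 0. -/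
/-- the directional derivative `D_v p` of a polynomial -/
noncomputable def dirDeriv {n : ℕ} (v : Fin n → ℝ) (p : MvPolynomial (Fin n) ℝ) :
    MvPolynomial (Fin n) ℝ :=
  ∑ i : Fin n, v i • MvPolynomial.pderiv i p

/-- the logarithmic potential `Φ^v_p = D_v p / p` as a function on `ℝⁿ` -/
noncomputable def potential {n : ℕ} (v : Fin n → ℝ) (p : MvPolynomial (Fin n) ℝ)
    (x : Fin n → ℝ) : ℝ :=
  MvPolynomial.eval x (dirDeriv v p) / MvPolynomial.eval x p

open Polynomial in
/-- The restriction `T ↦ p(z + T u)` of `p` to the line through `z` with real direction `u`. -/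
noncomputable def lineRestr {n : ℕ} {A : Type*} [CommRing A] [Algebra ℝ A] (z : Fin n → A)
    (u : Fin n → ℝ) (p : MvPolynomial (Fin n) ℝ) : A[X] :=
  MvPolynomial.aeval (fun i => C (z i) + C (algebraMap ℝ A (u i)) * X) p

theorem dirDeriv_mul {n : ℕ} (u : Fin n → ℝ) (p q : MvPolynomial (Fin n) ℝ) :
    dirDeriv u (p * q) = dirDeriv u p * q + p * dirDeriv u q := by
  simp only [dirDeriv, Finset.sum_mul, Finset.mul_sum, ← Finset.sum_add_distrib]
  refine Finset.sum_congr rfl fun i _ => ?_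
  rw [MvPolynomial.pderiv_mul, smul_add, smul_mul_assoc, mul_smul_comm]

theorem dirDeriv_X {n : ℕ} (u : Fin n → ℝ) (j : Fin n) :
    dirDeriv u (MvPolynomial.X j) = MvPolynomial.C (u j) := by
  rw [dirDeriv, Finset.sum_eq_single j]
  · simp [MvPolynomial.smul_eq_C_mul]
  · intro i _ hij
    rw [MvPolynomial.pderiv_X_of_ne hij.symm, smul_zero]
  · simp

theorem eval_lineRestr {n : ℕ} {A : Type*} [CommRing A] [Algebra ℝ A] (z : Fin n → A)
    (u : Fin n → ℝ) (p : MvPolynomial (Fin n) ℝ) (x : A) :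
    (lineRestr z u p).eval x
      = MvPolynomial.aeval (fun i => z i + algebraMap ℝ A (u i) * x) p := by
  induction p using MvPolynomial.induction_on with
  | C r => simp [lineRestr, Polynomial.algebraMap_apply]
  | add p q hp hq => simp_all [lineRestr]
  | mul_X p i hp => simp_all [lineRestr]

theorem derivative_lineRestr {n : ℕ} {A : Type*} [CommRing A] [Algebra ℝ A] (z : Fin n → A)
    (u : Fin n → ℝ) (p : MvPolynomial (Fin n) ℝ) :
    Polynomial.derivative (lineRestr z u p) = lineRestr z u (dirDeriv u p) := by
  induction p using MvPolynomial.induction_on with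
  | C r => simp [lineRestr, Polynomial.algebraMap_apply, dirDeriv]
  | add p q hp hq =>
    have : dirDeriv u (p + q) = dirDeriv u p + dirDeriv u q := by
      simp [dirDeriv, Finset.sum_add_distrib]
    rw [this]
    simp_all [lineRestr]
  | mul_X p i hp =>
    rw [dirDeriv_mul, dirDeriv_X]
    simp_all [lineRestr, Polynomial.algebraMap_apply]

theorem lineRestr_map {n : ℕ} (a u : Fin n → ℝ) (p : MvPolynomial (Fin n) ℝ) :
    lineRestr (fun i => (a i : ℂ)) u p = (lineRestr a u p).map (algebraMap ℝ ℂ) := by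
  induction p using MvPolynomial.induction_on with
  | C r => simp [lineRestr, Polynomial.algebraMap_apply]
  | add p q hp hq => simp_all [lineRestr]
  | mul_X p i hp => simp_all [lineRestr]

theorem eval_lineRestr_real {n : ℕ} (a u : Fin n → ℝ) (p : MvPolynomial (Fin n) ℝ) (x : ℝ) :
    (lineRestr a u p).eval x = MvPolynomial.eval (a + x • u) p := by
  rw [eval_lineRestr, MvPolynomial.aeval_eq_eval]
  congr 2
  ext i
  simp [mul_comm]

theorem eval_lineRestr_ofReal {n : ℕ} (a u : Fin n → ℝ) (p : MvPolynomial (Fin n) ℝ) (x : ℝ) :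
    (lineRestr (fun i => (a i : ℂ)) u p).eval (x : ℂ)
      = ((MvPolynomial.eval (a + x • u) p : ℝ) : ℂ) := by
  rw [lineRestr_map, Polynomial.eval_map_algebraMap, ← eval_lineRestr_real]
  exact Polynomial.aeval_algebraMap_apply ℂ x _

theorem aeval_conj_s10 {n : ℕ} (p : MvPolynomial (Fin n) ℝ) (z : Fin n → ℂ) :
    MvPolynomial.aeval (fun i => (starRingEnd ℂ) (z i)) p
      = (starRingEnd ℂ) (MvPolynomial.aeval z p) := by
  induction p using MvPolynomial.induction_on with
  | C r => simp
  | add p q hp hq => simp_all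
  | mul_X p i hp => simp_all

/-- If `p` is real stable, `a` above the roots, then along a strictly positive direction all roots
are real and negative. -/
theorem RealStable.root_neg {n : ℕ} {p : MvPolynomial (Fin n) ℝ} (hps : RealStable p)
    {a : Fin n → ℝ} (ha : AboveRoots p a) {u : Fin n → ℝ} (hu : ∀ i, 0 < u i) {z : ℂ}
    (hz : (lineRestr (fun i => (a i : ℂ)) u p).eval z = 0) : z.im = 0 ∧ z.re < 0 := by
  have h1 : ∀ w : ℂ, 0 < w.im → (lineRestr (fun i => (a i : ℂ)) u p).eval w ≠ 0 := by
    intro w hw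
    rw [eval_lineRestr]
    refine hps _ fun i => ?_
    simpa using mul_pos (hu i) hw
  have him : z.im = 0 := by
    rcases lt_trichotomy z.im 0 with h | h | h
    · exfalso
      refine h1 ((starRingEnd ℂ) z) (by simpa using h) ?_
      rw [eval_lineRestr] at hz ⊢
      have := aeval_conj_s10 p (fun i => (a i : ℂ) + algebraMap ℝ ℂ (u i) * z)
      rw [hz] at this
      simpa using this
    · exact h
    · exact absurd hz (h1 z h)
  refine ⟨him, ?_⟩
  by_contra! hre
  have : z = (z.re : ℂ) := by apply Complex.ext <;> simp [him]
  rw [this, eval_lineRestr_ofReal, Complex.ofReal_eq_zero] at hz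
  exact ha (z.re • u) (fun i => mul_nonneg hre (hu i).le) hz

theorem eval_derivative_div_eval_re {P : Polynomial ℂ} {x : ℂ} (hx : P.eval x ≠ 0) :
    (P.derivative.eval x / P.eval x).re = (P.roots.map fun z => (1 / (x - z)).re).sum := by
  rw [(IsAlgClosed.splits P).eval_derivative_div_eval_of_ne_zero hx]
  exact (map_multiset_sum Complex.reCLM _).trans (by rw [Multiset.map_map]; rfl)

theorem eval_derivative_div_eval_im {P : Polynomial ℂ} {x : ℂ} (hx : P.eval x ≠ 0) :
    (P.derivative.eval x / P.eval x).im = (P.roots.map fun z => (1 / (x - z)).im).sum := by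
  rw [(IsAlgClosed.splits P).eval_derivative_div_eval_of_ne_zero hx]
  exact (map_multiset_sum Complex.imCLM _).trans (by rw [Multiset.map_map]; rfl)

theorem eval_derivative_div_eval_re_nonneg {P : Polynomial ℂ} {x : ℂ} (hx : P.eval x ≠ 0)
    (h : ∀ z, P.eval z = 0 → z.re ≤ x.re) : 0 ≤ (P.derivative.eval x / P.eval x).re := by
  have hP : P ≠ 0 := by rintro rfl; simp at hx
  rw [eval_derivative_div_eval_re hx]
  refine Multiset.sum_nonneg fun y hy => ?_
  obtain ⟨z, hz, rfl⟩ := Multiset.mem_map.1 hy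
  rw [one_div, Complex.inv_re]
  exact div_nonneg (by simpa using h z ((Polynomial.mem_roots hP).1 hz)) (Complex.normSq_nonneg _)

theorem eval_derivative_div_eval_im_nonpos {P : Polynomial ℂ} {x : ℂ} (hx : P.eval x ≠ 0)
    (h : ∀ z, P.eval z = 0 → z.im ≤ x.im) : (P.derivative.eval x / P.eval x).im ≤ 0 := by
  have hP : P ≠ 0 := by rintro rfl; simp at hx
  rw [eval_derivative_div_eval_im hx]
  refine (Multiset.sum_map_le_sum_map _ (fun _ => 0) fun z hz => ?_).trans_eq (by simp)
  rw [one_div, Complex.inv_im]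
  refine div_nonpos_of_nonpos_of_nonneg ?_ (Complex.normSq_nonneg _)
  simpa using h z ((Polynomial.mem_roots hP).1 hz)

/-- If all roots of `P` lie in the closed third quadrant, the imaginary part of the logarithmic
derivative of `P` is monotone along the positive real axis. -/
theorem eval_derivative_div_eval_im_mono {P : Polynomial ℂ} {x y : ℝ} (hx0 : 0 ≤ x) (hxy : x ≤ y)
    (h : ∀ z, P.eval z = 0 → z.im ≤ 0 ∧ z.re < 0) :
    (P.derivative.eval (x : ℂ) / P.eval (x : ℂ)).im
      ≤ (P.derivative.eval (y : ℂ) / P.eval (y : ℂ)).im := by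
  have hne : ∀ t : ℝ, 0 ≤ t → P.eval (t : ℂ) ≠ 0 := fun t ht h0 => by
    have := (h _ h0).2
    rw [Complex.ofReal_re] at this
    linarith
  have hP : P ≠ 0 := by rintro rfl; exact hne x hx0 (by simp)
  rw [eval_derivative_div_eval_im (hne x hx0), eval_derivative_div_eval_im (hne y (hx0.trans hxy))]
  refine Multiset.sum_map_le_sum_map _ _ fun z hz => ?_
  obtain ⟨him, hre⟩ := h z ((Polynomial.mem_roots hP).1 hz)
  rw [one_div, one_div, Complex.inv_im, Complex.inv_im, Complex.normSq_apply, Complex.normSq_apply]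
  simp only [Complex.sub_re, Complex.sub_im, Complex.ofReal_re, Complex.ofReal_im, zero_sub,
    neg_neg]
  have h1 : 0 < x - z.re := by linarith
  have h2 : x - z.re ≤ y - z.re := by linarith
  rw [div_le_div_iff₀ (by nlinarith [mul_self_nonneg z.im])
    (by nlinarith [mul_self_nonneg z.im])]
  refine mul_le_mul_of_nonpos_left ?_ him
  nlinarith

/-- A polynomial whose roots all lie in the open left half plane is bounded below by
a multiple of `(1 + ‖t‖) ^ P.natDegree` on the closed right half plane. -/
theorem exists_pow_le_norm_eval {P : Polynomial ℂ} (hP : P ≠ 0)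
    (h : ∀ z, P.eval z = 0 → z.re < 0) :
    ∃ κ : ℝ, 0 < κ ∧ ∀ t : ℂ, 0 ≤ t.re → κ * (1 + ‖t‖) ^ P.natDegree ≤ ‖P.eval t‖ := by
  have key : ∀ S : Multiset ℂ, (∀ z ∈ S, z.re < 0) → ∃ κ : ℝ, 0 < κ ∧ ∀ t : ℂ, 0 ≤ t.re →
      κ * (1 + ‖t‖) ^ S.card ≤ ‖(S.map (t - ·)).prod‖ := by
    intro S
    induction S using Multiset.induction_on with
    | empty => exact fun _ => ⟨1, one_pos, by simp⟩
    | cons r S ih =>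
      intro hS
      obtain ⟨κ, hκ, hb⟩ := ih fun z hz => hS z (Multiset.mem_cons_of_mem hz)
      have hr := hS r (Multiset.mem_cons_self r S)
      set M := (1 + ‖r‖) / (-r.re) + 1 with hM
      have hM0 : 0 < M := by
        have : 0 < -r.re := by linarith
        positivity
      refine ⟨M⁻¹ * κ, by positivity, fun t ht => ?_⟩
      have h1 : -r.re ≤ ‖t - r‖ := by
        refine le_trans ?_ (Complex.re_le_norm _)
        simpa using ht
      have h2 : ‖t‖ ≤ ‖t - r‖ + ‖r‖ := by simpa using norm_add_le (t - r) r
      have h3 : 1 + ‖r‖ ≤ (1 + ‖r‖) / (-r.re) * ‖t - r‖ := by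
        rw [div_mul_eq_mul_div, le_div_iff₀ (by linarith)]
        gcongr
      have h4 : M⁻¹ * (1 + ‖t‖) ≤ ‖t - r‖ := by
        rw [inv_mul_le_iff₀ hM0, hM]
        linarith
      rw [Multiset.map_cons, Multiset.prod_cons, norm_mul, Multiset.card_cons, pow_succ]
      calc M⁻¹ * κ * ((1 + ‖t‖) ^ S.card * (1 + ‖t‖))
          = (M⁻¹ * (1 + ‖t‖)) * (κ * (1 + ‖t‖) ^ S.card) := by ring
        _ ≤ _ := by gcongr; exact hb t ht
  have hs := IsAlgClosed.splits P
  obtain ⟨κ, hκ, hb⟩ := key P.roots fun z hz => h z ((Polynomial.mem_roots hP).1 hz)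
  refine ⟨‖P.leadingCoeff‖ * κ, mul_pos (by simpa using hP) hκ, fun t ht => ?_⟩
  rw [hs.eval_eq_prod_roots, norm_mul, mul_assoc, hs.natDegree_eq_card_roots]
  gcongr
  exact hb t ht

theorem exists_norm_eval_le_pow (P : Polynomial ℂ) {d : ℕ} (hd : P.natDegree ≤ d) :
    ∃ K : ℝ, 0 ≤ K ∧ ∀ t : ℂ, ‖P.eval t‖ ≤ K * (1 + ‖t‖) ^ d := by
  refine ⟨∑ i ∈ Finset.range (P.natDegree + 1), ‖P.coeff i‖, by positivity, fun t => ?_⟩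
  rw [Polynomial.eval_eq_sum_range, Finset.sum_mul]
  refine (norm_sum_le _ _).trans (Finset.sum_le_sum fun i hi => ?_)
  rw [norm_mul, norm_pow]
  have : i ≤ d := by have := Finset.mem_range.1 hi; lia
  gcongr
  calc ‖t‖ ^ i ≤ (1 + ‖t‖) ^ i := by gcongr; linarith
    _ ≤ (1 + ‖t‖) ^ d := pow_le_pow_right₀ (by linarith [norm_nonneg t]) this

/-- Small perturbations of no larger degree keep all roots in the open left half plane. -/
theorem exists_eval_add_ne_zero {P Q : Polynomial ℂ} (hP : P ≠ 0)
    (h : ∀ z, P.eval z = 0 → z.re < 0) (hQ : Q.natDegree ≤ P.natDegree) :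
    ∃ δ : ℝ, 0 < δ ∧ ∀ c : ℂ, ‖c‖ < δ → ∀ z, (P + Polynomial.C c * Q).eval z = 0 → z.re < 0 := by
  obtain ⟨κ, hκ, hb⟩ := exists_pow_le_norm_eval hP h
  obtain ⟨K, hK, hK'⟩ := exists_norm_eval_le_pow Q hQ
  refine ⟨κ / (K + 1), by positivity, fun c hc z hz => ?_⟩
  by_contra! hre
  simp only [Polynomial.eval_add, Polynomial.eval_mul, Polynomial.eval_C] at hz
  have h1 : ‖P.eval z‖ = ‖c‖ * ‖Q.eval z‖ := by
    rw [eq_neg_of_add_eq_zero_left hz, norm_neg, norm_mul]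
  have h2 := hb z hre
  have h3 := hK' z
  have h4 : 0 < (1 + ‖z‖) ^ P.natDegree := by positivity
  rw [lt_div_iff₀ (by positivity)] at hc
  have h5 : ‖c‖ * ‖Q.eval z‖ ≤ ‖c‖ * (K * (1 + ‖z‖) ^ P.natDegree) := by gcongr
  nlinarith [norm_nonneg c]

/-- `h / g` maps the upper half plane to the closed lower half plane, where `g` and `h` are the
restrictions of `p` and `D_v p` to a line with positive direction. -/
theorem RealStable.im_div_nonpos {n : ℕ} {p : MvPolynomial (Fin n) ℝ} (hps : RealStable p)
    (a : Fin n → ℝ) {v w : Fin n → ℝ} (hv : ∀ i, 0 < v i) (hw : ∀ i, 0 < w i) {t : ℂ}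
    (ht : 0 < t.im) :
    ((lineRestr (fun i => (a i : ℂ)) w (dirDeriv v p)).eval t
      / (lineRestr (fun i => (a i : ℂ)) w p).eval t).im ≤ 0 := by
  set b : Fin n → ℂ := fun i => (a i : ℂ) + algebraMap ℝ ℂ (w i) * t with hb
  have hl : ∀ q, (lineRestr (fun i => (a i : ℂ)) w q).eval t = (lineRestr b v q).eval 0 := by
    intro q
    simp [eval_lineRestr, hb]
  have hne : ∀ s : ℂ, 0 ≤ s.im → (lineRestr b v p).eval s ≠ 0 := by
    intro s hs
    rw [eval_lineRestr]
    refine hps _ fun i => ?_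
    have h1 := mul_pos (hw i) ht
    have h2 := mul_nonneg (hv i).le hs
    simp only [hb, Complex.coe_algebraMap, Complex.add_im, Complex.ofReal_im,
      Complex.im_ofReal_mul, zero_add]
    linarith
  rw [hl, hl, ← derivative_lineRestr]
  refine eval_derivative_div_eval_im_nonpos (hne 0 (by simp)) fun z hz => ?_
  by_contra! him
  exact hne z (by simpa using him.le) hz

theorem add_C_mul_I_root_im_nonpos {g h : Polynomial ℂ} (hg : ∀ t : ℂ, 0 < t.im → g.eval t ≠ 0)
    (hgh : ∀ t : ℂ, 0 < t.im → (h.eval t / g.eval t).im ≤ 0) {ε : ℝ} (hε : 0 ≤ ε) {z : ℂ}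
    (hz : (g + Polynomial.C (ε * Complex.I) * h).eval z = 0) : z.im ≤ 0 := by
  by_contra! him
  have h0 := hg z him
  have h1 := hgh z him
  simp only [Polynomial.eval_add, Polynomial.eval_mul, Polynomial.eval_C] at hz
  have h2 : 1 + ε * Complex.I * (h.eval z / g.eval z) = 0 := by
    field_simp
    linear_combination hz
  have h3 := congrArg Complex.re h2
  simp only [Complex.add_re, Complex.one_re, Complex.mul_re, Complex.mul_im, Complex.ofReal_re,
    Complex.ofReal_im, Complex.I_re, Complex.I_im, Complex.zero_re] at h3
  nlinarith

theorem im_div_add_mul_I (g₀ g₁ h₀ h₁ ε : ℝ) :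
    (((g₁ : ℂ) + ε * Complex.I * h₁) / (g₀ + ε * Complex.I * h₀)).im
      = ε * ((h₁ * g₀ - h₀ * g₁) / (g₀ ^ 2 + ε ^ 2 * h₀ ^ 2)) := by
  rw [Complex.div_im, Complex.normSq_apply]
  simp
  ring

/-- The derivative of `potential v p` in direction `w`. -/
noncomputable def potentialDeriv {n : ℕ} (v w : Fin n → ℝ) (p : MvPolynomial (Fin n) ℝ)
    (x : Fin n → ℝ) : ℝ :=
  (MvPolynomial.eval x (dirDeriv w (dirDeriv v p)) * MvPolynomial.eval x p
    - MvPolynomial.eval x (dirDeriv v p) * MvPolynomial.eval x (dirDeriv w p))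
    / MvPolynomial.eval x p ^ 2

theorem hasDerivAt_potential {n : ℕ} (v w : Fin n → ℝ) (p : MvPolynomial (Fin n) ℝ)
    (a : Fin n → ℝ) (t : ℝ) (h : MvPolynomial.eval (a + t • w) p ≠ 0) :
    HasDerivAt (fun t : ℝ => potential v p (a + t • w)) (potentialDeriv v w p (a + t • w)) t := by
  have key : ∀ q : MvPolynomial (Fin n) ℝ, HasDerivAt
      (fun t : ℝ => MvPolynomial.eval (a + t • w) q)
      (MvPolynomial.eval (a + t • w) (dirDeriv w q)) t := by
    intro q
    have := (lineRestr a w q).hasDerivAt t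
    simpa only [derivative_lineRestr, eval_lineRestr_real] using this
  exact (key _).div (key p) h

theorem AboveRoots.add_smul {n : ℕ} {p : MvPolynomial (Fin n) ℝ} {a : Fin n → ℝ}
    (ha : AboveRoots p a) {w : Fin n → ℝ} (hw : ∀ i, 0 ≤ w i) {x : ℝ} (hx : 0 ≤ x) :
    AboveRoots p (a + x • w) := by
  intro t ht
  rw [add_assoc]
  exact ha _ fun i => add_nonneg (mul_nonneg hx (hw i)) (ht i)

theorem AboveRoots.eval_ne_zero {n : ℕ} {p : MvPolynomial (Fin n) ℝ} {a : Fin n → ℝ}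
    (ha : AboveRoots p a) : MvPolynomial.eval a p ≠ 0 := by
  simpa using ha 0 fun i => le_rfl

theorem RealStable.potential_nonneg_of_pos {n : ℕ} {p : MvPolynomial (Fin n) ℝ}
    (hps : RealStable p) {a : Fin n → ℝ} (ha : AboveRoots p a) {v : Fin n → ℝ}
    (hv : ∀ i, 0 < v i) : 0 ≤ potential v p a := by
  have he : ∀ q, (lineRestr (fun i => (a i : ℂ)) v q).eval (0 : ℂ)
      = ((MvPolynomial.eval a q : ℝ) : ℂ) := by
    intro q
    simpa using eval_lineRestr_ofReal a v q 0
  have h := eval_derivative_div_eval_re_nonneg (P := lineRestr (fun i => (a i : ℂ)) v p) (x := 0)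
    (by rw [he]; exact_mod_cast ha.eval_ne_zero)
    fun z hz => by simpa using (hps.root_neg ha hv hz).2.le
  rw [derivative_lineRestr, he, he, ← Complex.ofReal_div, Complex.ofReal_re] at h
  exact h

theorem RealStable.potentialDeriv_nonpos_of_pos {n : ℕ} {p : MvPolynomial (Fin n) ℝ}
    (hps : RealStable p) {a : Fin n → ℝ} (ha : AboveRoots p a) {v w : Fin n → ℝ}
    (hv : ∀ i, 0 < v i) (hw : ∀ i, 0 < w i) : potentialDeriv v w p a ≤ 0 := by
  set g := lineRestr (fun i => (a i : ℂ)) w p with hg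
  set h := lineRestr (fun i => (a i : ℂ)) w (dirDeriv v p) with hh
  have he : ∀ q, (lineRestr (fun i => (a i : ℂ)) w q).eval (0 : ℂ)
      = ((MvPolynomial.eval a q : ℝ) : ℂ) := by
    intro q
    simpa using eval_lineRestr_ofReal a w q 0
  have hroot : ∀ z, (g + Polynomial.C (((1 : ℝ) : ℂ) * Complex.I) * h).eval z = 0 → z.im ≤ 0 :=
    fun z hz => add_C_mul_I_root_im_nonpos
      (fun t ht h0 => ht.ne' (hps.root_neg ha hw h0).1)
      (fun t ht => hps.im_div_nonpos a hv hw ht) zero_le_one hz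
  have hp := ha.eval_ne_zero
  have key := eval_derivative_div_eval_im_nonpos
    (P := g + Polynomial.C (((1 : ℝ) : ℂ) * Complex.I) * h) (x := 0) ?_
    (by simpa using hroot)
  · simp only [Polynomial.derivative_add, Polynomial.derivative_C_mul, Polynomial.eval_add,
      Polynomial.eval_mul, Polynomial.eval_C, hg, hh, derivative_lineRestr, he] at key
    rw [im_div_add_mul_I, one_mul] at key
    have hpos : 0 < MvPolynomial.eval a p ^ 2 + 1 ^ 2 * MvPolynomial.eval a (dirDeriv v p) ^ 2 := by
      positivity
    rw [div_le_iff₀ hpos, zero_mul] at key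
    exact div_nonpos_of_nonpos_of_nonneg key (sq_nonneg _)
  · simp only [Polynomial.eval_add, Polynomial.eval_mul, Polynomial.eval_C, hg, hh, he]
    intro h0
    have := congrArg Complex.re h0
    simp at this
    exact hp this

theorem RealStable.natDegree_lineRestr_le {n : ℕ} {p : MvPolynomial (Fin n) ℝ}
    (hps : RealStable p) {a : Fin n → ℝ} (ha : AboveRoots p a) {v w : Fin n → ℝ}
    (hv : ∀ i, 0 < v i) (hw : ∀ i, 0 < w i) :
    (lineRestr a w (dirDeriv v p)).natDegree ≤ (lineRestr a w p).natDegree := by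
  have hw' := fun i => (hw i).le
  have hne : lineRestr a w p ≠ 0 := by
    intro h0
    have := eval_lineRestr_real a w p 0
    rw [h0] at this
    exact ha.eval_ne_zero (by simpa using this.symm)
  have hderiv : ∀ x : ℝ, 0 ≤ x → HasDerivAt (fun t : ℝ => potential v p (a + t • w))
      (potentialDeriv v w p (a + x • w)) x :=
    fun x hx => hasDerivAt_potential v w p a x (ha.add_smul hw' hx).eval_ne_zero
  have hanti : AntitoneOn (fun t : ℝ => potential v p (a + t • w)) (Set.Ici 0) := by
    refine antitoneOn_of_deriv_nonpos (convex_Ici 0)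
      (fun x hx => (hderiv x hx).continuousAt.continuousWithinAt)
      (fun x hx => (hderiv x (interior_subset hx)).differentiableAt.differentiableWithinAt)
      fun x hx => ?_
    rw [(hderiv x (interior_subset hx)).deriv]
    exact hps.potentialDeriv_nonpos_of_pos (ha.add_smul hw' (interior_subset hx)) hv hw
  by_contra! hlt
  have htend := Polynomial.abs_div_tendsto_atTop_atTop_of_degree_gt _ _
    (Polynomial.degree_lt_degree hlt) hne
  obtain ⟨x, hx, hx0⟩ := ((htend.eventually_gt_atTop (potential v p a)).and
    (Filter.eventually_ge_atTop 0)).exists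
  rw [eval_lineRestr_real, eval_lineRestr_real] at hx
  change potential v p a < |potential v p (a + x • w)| at hx
  rw [abs_of_nonneg (hps.potential_nonneg_of_pos (ha.add_smul hw' hx0) hv)] at hx
  have := hanti (Set.mem_Ici.2 le_rfl) hx0 hx0
  simp only [zero_smul, add_zero] at this
  linarith

theorem RealStable.potentialDeriv_mono_of_pos {n : ℕ} {p : MvPolynomial (Fin n) ℝ}
    (hps : RealStable p) {a : Fin n → ℝ} (ha : AboveRoots p a) {v w : Fin n → ℝ}
    (hv : ∀ i, 0 < v i) (hw : ∀ i, 0 < w i) {x : ℝ} (hx : 0 ≤ x) :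
    potentialDeriv v w p a ≤ potentialDeriv v w p (a + x • w) := by
  set g := lineRestr (fun i => (a i : ℂ)) w p with hg
  set h := lineRestr (fun i => (a i : ℂ)) w (dirDeriv v p) with hh
  have hg0 : g ≠ 0 := by
    intro h0
    have := eval_lineRestr_ofReal a w p 0
    rw [← hg, h0] at this
    exact ha.eval_ne_zero (by simpa using this.symm)
  have hdeg : h.natDegree ≤ g.natDegree := by
    rw [hg, hh, lineRestr_map, lineRestr_map, Polynomial.natDegree_map, Polynomial.natDegree_map]
    exact hps.natDegree_lineRestr_le ha hv hw
  obtain ⟨δ, hδ, hre⟩ := exists_eval_add_ne_zero hg0 (fun z hz => (hps.root_neg ha hw hz).2) hdeg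
  let F : ℝ → ℝ → ℝ := fun y ε =>
    (MvPolynomial.eval (a + y • w) (dirDeriv w (dirDeriv v p)) * MvPolynomial.eval (a + y • w) p
      - MvPolynomial.eval (a + y • w) (dirDeriv v p) * MvPolynomial.eval (a + y • w) (dirDeriv w p))
    / (MvPolynomial.eval (a + y • w) p ^ 2
      + ε ^ 2 * MvPolynomial.eval (a + y • w) (dirDeriv v p) ^ 2)
  have hF : ∀ ε : ℝ, 0 < ε → ε < δ → F 0 ε ≤ F x ε := by
    intro ε hε hεδ
    have key := eval_derivative_div_eval_im_mono
      (P := g + Polynomial.C ((ε : ℂ) * Complex.I) * h) le_rfl hx fun z hz =>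
      ⟨add_C_mul_I_root_im_nonpos (fun t ht h0 => ht.ne' (hps.root_neg ha hw h0).1)
        (fun t ht => hps.im_div_nonpos a hv hw ht) hε.le hz,
      hre _ (by simpa [abs_of_pos hε] using hεδ) z hz⟩
    simp only [Polynomial.derivative_add, Polynomial.derivative_C_mul, Polynomial.eval_add,
      Polynomial.eval_mul, Polynomial.eval_C, hg, hh, derivative_lineRestr,
      eval_lineRestr_ofReal, im_div_add_mul_I] at key
    exact le_of_mul_le_mul_left key hε
  have hlim : ∀ y : ℝ, 0 ≤ y → Filter.Tendsto (F y) (nhdsWithin 0 (Set.Ioi 0))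
      (nhds (potentialDeriv v w p (a + y • w))) := by
    intro y hy
    have hp := (ha.add_smul (fun i => (hw i).le) hy).eval_ne_zero
    have hc : ContinuousAt (F y) 0 := by
      refine ContinuousAt.div (by fun_prop) (by fun_prop) ?_
      simpa using hp
    have := hc.tendsto
    simp only [F, ne_eq, OfNat.ofNat_ne_zero, not_false_eq_true, zero_pow, zero_mul, add_zero]
      at this
    exact this.mono_left nhdsWithin_le_nhds
  have h0 := hlim 0 le_rfl
  rw [zero_smul, add_zero] at h0
  refine le_of_tendsto_of_tendsto h0 (hlim x hx) ?_
  filter_upwards [Ioo_mem_nhdsGT hδ] with ε hε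
  exact hF ε hε.1 hε.2

theorem continuous_eval_dirDeriv {n : ℕ} (p : MvPolynomial (Fin n) ℝ) {v x : ℝ → Fin n → ℝ}
    (hv : Continuous v) (hx : Continuous x) :
    Continuous fun ε => MvPolynomial.eval (x ε) (dirDeriv (v ε) p) := by
  have h1 : ∀ q : MvPolynomial (Fin n) ℝ, Continuous fun ε => MvPolynomial.eval (x ε) q :=
    fun q => (MvPolynomial.continuous_eval q).comp hx
  simp only [dirDeriv, map_sum, MvPolynomial.smul_eval]
  have h2 : ∀ i, Continuous fun ε => v ε i := fun i => (continuous_apply i).comp hv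
  fun_prop

theorem dirDeriv_dirDeriv {n : ℕ} (v w : Fin n → ℝ) (p : MvPolynomial (Fin n) ℝ) :
    dirDeriv w (dirDeriv v p) = ∑ i, v i • dirDeriv w (MvPolynomial.pderiv i p) := by
  simp only [dirDeriv, map_sum, Derivation.map_smul, Finset.smul_sum]
  rw [Finset.sum_comm]
  exact Finset.sum_congr rfl fun i _ => Finset.sum_congr rfl fun j _ => smul_comm _ _ _

theorem continuousAt_potentialDeriv {n : ℕ} (p : MvPolynomial (Fin n) ℝ)
    {v w x : ℝ → Fin n → ℝ} (hv : Continuous v) (hw : Continuous w) (hx : Continuous x) {ε : ℝ}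
    (hp : MvPolynomial.eval (x ε) p ≠ 0) :
    ContinuousAt (fun ε => potentialDeriv (v ε) (w ε) p (x ε)) ε := by
  have h1 : Continuous fun ε => MvPolynomial.eval (x ε) p :=
    (MvPolynomial.continuous_eval p).comp hx
  have h2 : ∀ i, Continuous fun ε => v ε i := fun i => (continuous_apply i).comp hv
  have h3 : Continuous fun ε => MvPolynomial.eval (x ε) (dirDeriv (w ε) (dirDeriv (v ε) p)) := by
    simp only [dirDeriv_dirDeriv, map_sum, MvPolynomial.smul_eval]
    exact continuous_finsetSum _ fun i _ => (h2 i).mul (continuous_eval_dirDeriv _ hw hx)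
  have h4 := continuous_eval_dirDeriv p hv hx
  have h5 := continuous_eval_dirDeriv p hw hx
  exact ((h3.mul h1).sub (h4.mul h5)).continuousAt.div (h1.pow 2).continuousAt (pow_ne_zero 2 hp)

/-- Monotonicity and convexity of the logarithmic potential of a real stable polynomial
above its roots: `Φ^v_p(a) ≥ 0`, `D_w Φ^v_p(a) ≤ 0` and `D_w² Φ^v_p(a) ≥ 0`, where the
directional derivatives along `w` are taken as derivatives of `t ↦ Φ^v_p(a + t·w)` at
`t = 0`. -/
theorem potential_nonneg_monotone_convex {n : ℕ} (p : MvPolynomial (Fin n) ℝ)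
    (hp0 : p ≠ 0) (hps : RealStable p) (a : Fin n → ℝ) (ha : AboveRoots p a)
    (v w : Fin n → ℝ) (hv0 : ∀ i, 0 ≤ v i) (hw0 : ∀ i, 0 ≤ w i)
    (hv1 : ∑ i, v i ^ 2 = 1) (hw1 : ∑ i, w i ^ 2 = 1) :
    0 ≤ potential v p a ∧
      deriv (fun t : ℝ => potential v p (a + t • w)) 0 ≤ 0 ∧
      0 ≤ iteratedDeriv 2 (fun t : ℝ => potential v p (a + t • w)) 0 := by
  let V : ℝ → Fin n → ℝ := fun ε i => v i + ε
  let W : ℝ → Fin n → ℝ := fun ε i => w i + ε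
  have hV : Continuous V := by fun_prop
  have hW : Continuous W := by fun_prop
  have hV0 : V 0 = v := by ext i; simp [V]
  have hW0 : W 0 = w := by ext i; simp [W]
  have hVpos : ∀ ε > 0, ∀ i, 0 < V ε i := fun ε hε i => add_pos_of_nonneg_of_pos (hv0 i) hε
  have hWpos : ∀ ε > 0, ∀ i, 0 < W ε i := fun ε hε i => add_pos_of_nonneg_of_pos (hw0 i) hε
  have hd : ∀ x : ℝ, 0 ≤ x → HasDerivAt (fun t : ℝ => potential v p (a + t • w))
      (potentialDeriv v w p (a + x • w)) x :=
    fun x hx => hasDerivAt_potential v w p a x (ha.add_smul hw0 hx).eval_ne_zero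
  have hlim : ∀ x : ℝ, 0 ≤ x → Filter.Tendsto
      (fun ε => potentialDeriv (V ε) (W ε) p (a + x • W ε)) (nhdsWithin 0 (Set.Ioi 0))
      (nhds (potentialDeriv v w p (a + x • w))) := by
    intro x hx
    have hc := continuousAt_potentialDeriv p (x := fun ε => a + x • W ε) hV hW (by fun_prop)
      (ε := 0) (by rw [hW0]; exact (ha.add_smul hw0 hx).eval_ne_zero)
    have := hc.tendsto
    rw [hV0, hW0] at this
    exact this.mono_left nhdsWithin_le_nhds
  have hlim0 := hlim 0 le_rfl
  simp only [zero_smul, add_zero] at hlim0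
  have hmono : ∀ x : ℝ, 0 ≤ x → potentialDeriv v w p a ≤ potentialDeriv v w p (a + x • w) := by
    intro x hx
    refine le_of_tendsto_of_tendsto hlim0 (hlim x hx) ?_
    filter_upwards [self_mem_nhdsWithin] with ε hε
    exact hps.potentialDeriv_mono_of_pos ha (hVpos ε hε) (hWpos ε hε) hx
  refine ⟨?_, ?_, ?_⟩
  · have hc : Filter.Tendsto (fun ε => potential (V ε) p a) (nhdsWithin 0 (Set.Ioi 0))
        (nhds (potential v p a)) := by
      have := (continuous_eval_dirDeriv p hV (continuous_const (y := a))).div_const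
        (MvPolynomial.eval a p)
      have := this.tendsto 0
      rw [hV0] at this
      exact this.mono_left nhdsWithin_le_nhds
    refine ge_of_tendsto hc ?_
    filter_upwards [self_mem_nhdsWithin] with ε hε
    exact hps.potential_nonneg_of_pos ha (hVpos ε hε)
  · rw [(hd 0 le_rfl).deriv, zero_smul, add_zero]
    refine le_of_tendsto hlim0 ?_
    filter_upwards [self_mem_nhdsWithin] with ε hε
    exact hps.potentialDeriv_nonpos_of_pos ha (hVpos ε hε) (hWpos ε hε)
  · rw [iteratedDeriv_succ, iteratedDeriv_one]
    set f := fun t : ℝ => potential v p (a + t • w) with hf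
    by_cases hdiff : DifferentiableAt ℝ (deriv f) 0
    · have hs := hdiff.hasDerivAt.hasDerivWithinAt (s := Set.Ioi 0)
      rw [hasDerivWithinAt_iff_tendsto_slope' (by simp)] at hs
      refine ge_of_tendsto hs ?_
      filter_upwards [self_mem_nhdsWithin] with x hx
      have hx0 : (0 : ℝ) < x := hx
      rw [slope_def_field, (hd x hx0.le).deriv, (hd 0 le_rfl).deriv, zero_smul, add_zero, sub_zero]
      exact div_nonneg (sub_nonneg.2 (hmono x hx0.le)) hx0.le
    · rw [deriv_zero_of_not_differentiableAt hdiff]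
end

section
/- Let μ be a homogeneous Strongly Rayleigh probability measure on the subsets of [n], with μ supported on nonempty sets, such that the marginal probability of every element i ∈ [n] is at most ε, where 0 < ε ≤ 1. Let A ∈ M_n(ℂ) be a positive semidefinite contraction (0 ≤ A ≤ I) all of whose diagonal entries are at most α ≥ 0. If √α + √ε ≤ 1, then there exists S ⊆ [n] with μ(S) > 0 such that the largest eigenvalue of A(S) is strictly less than 4·ε^{1/4} + α. -/
open ComplexOrder
/-- the generating polynomial `P_μ = Σ_S μ(S) z^S` of a measure on subsets of `[n]` -/
noncomputable def genPoly {n : ℕ} (μ : Finset (Fin n) → ℝ) : MvPolynomial (Fin n) ℝ :=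
  ∑ S : Finset (Fin n), MvPolynomial.C (μ S) * ∏ i ∈ S, MvPolynomial.X i

/-- the principal submatrix `A(S)` -/
def subMat {n : ℕ} (A : Matrix (Fin n) (Fin n) ℂ) (S : Finset (Fin n)) :
    Matrix {x // x ∈ S} {x // x ∈ S} ℂ :=
  A.submatrix Subtype.val Subtype.val


section Multiaffine

variable {σ K : Type*} [DecidableEq σ] [Field K]

/-- The difference operator in the `i`-th direction, which is the `i`-th partial derivative
on multiaffine functions. -/
def pdiff (i : σ) (F : (σ → K) → K) : (σ → K) → K := fun w => F (w + Pi.single i 1) - F w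

/-- A function of several variables that is affine in each variable separately. -/
def Multiaffine (F : (σ → K) → K) : Prop :=
  ∀ w i t, F (w + Pi.single i t) = F w + t * pdiff i F w

theorem pdiff_add (i : σ) (F G : (σ → K) → K) : pdiff i (F + G) = pdiff i F + pdiff i G := by
  funext w; simp only [pdiff, Pi.add_apply]; ring

theorem pdiff_comm (i j : σ) (F : (σ → K) → K) : pdiff i (pdiff j F) = pdiff j (pdiff i F) := by
  funext w; simp only [pdiff, add_right_comm w (Pi.single i 1)]; ring

theorem Multiaffine.pdiff {F : (σ → K) → K} (hF : Multiaffine F) (i : σ) :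
    Multiaffine (pdiff i F) := by
  intro w j t
  rw [pdiff_comm j i]
  simp only [_root_.pdiff, add_right_comm w (Pi.single j t), hF _ j t]
  ring

theorem Multiaffine.add {F G : (σ → K) → K} (hF : Multiaffine F) (hG : Multiaffine G) :
    Multiaffine (F + G) := by
  intro w i t
  rw [pdiff_add]
  simp only [Pi.add_apply, hF w i t, hG w i t]
  ring

theorem Multiaffine.pdiff_self {F : (σ → K) → K} (hF : Multiaffine F) (i : σ) :
    _root_.pdiff i (_root_.pdiff i F) = 0 := by
  funext w
  have h : w + Pi.single i 1 + Pi.single i 1 = w + Pi.single i (1 + 1) := by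
    rw [Pi.single_add, add_assoc]
  have h1 := hF w i (1 + 1)
  have h2 := hF w i 1
  change F (w + Pi.single i 1 + Pi.single i 1) - F (w + Pi.single i 1) -
    (F (w + Pi.single i 1) - F w) = 0
  rw [h, h1, h2]
  ring

end Multiaffine

section Stability

variable {σ : Type*} [DecidableEq σ]

/-- `G` is the restriction to real arguments of the multiaffine function `F`, which either has no
zero on the product of upper half planes or vanishes there. -/
structure IsStableExtension (F : (σ → ℂ) → ℂ) (G : (σ → ℝ) → ℝ) : Prop where
  continuous : Continuous F
  multiaffine : Multiaffine F
  ofReal : ∀ w : σ → ℝ, F (fun i => (w i : ℂ)) = G w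
  stable : (∀ w : σ → ℂ, (∀ i, 0 < (w i).im) → F w ≠ 0) ∨
    ∀ w : σ → ℂ, (∀ i, 0 < (w i).im) → F w = 0

/-- Real multiaffine functions that are real stable or zero. -/
def StableMultiaffine (G : (σ → ℝ) → ℝ) : Prop := ∃ F, IsStableExtension F G

theorem ofReal_add_single (w : σ → ℝ) (i : σ) (t : ℝ) :
    (fun k => (((w + Pi.single i t : σ → ℝ) k : ℝ) : ℂ)) =
      (fun k => (w k : ℂ)) + Pi.single i (t : ℂ) := by
  funext k
  by_cases h : k = i
  · subst h; simp
  · simp [h]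

theorem IsStableExtension.ofReal_pdiff {F : (σ → ℂ) → ℂ} {G : (σ → ℝ) → ℝ}
    (h : IsStableExtension F G) (i : σ) (w : σ → ℝ) :
    pdiff i F (fun k => (w k : ℂ)) = pdiff i G w := by
  have := ofReal_add_single w i 1
  rw [Complex.ofReal_one] at this
  simp only [pdiff, Complex.ofReal_sub, ← h.ofReal, this]

theorem StableMultiaffine.multiaffine {G : (σ → ℝ) → ℝ} (h : StableMultiaffine G) :
    Multiaffine G := by
  obtain ⟨F, hF⟩ := h
  intro w i t
  have := hF.multiaffine (fun k => (w k : ℂ)) i t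
  rw [← ofReal_add_single, hF.ofReal, hF.ofReal, hF.ofReal_pdiff] at this
  exact_mod_cast this

theorem continuous_pdiff {F : (σ → ℂ) → ℂ} (hF : Continuous F) (i : σ) :
    Continuous (pdiff i F) := by
  unfold pdiff; fun_prop

theorem im_add_single_pos {w : σ → ℂ} (hw : ∀ i, 0 < (w i).im) {i : σ} {t : ℂ}
    (ht : 0 < (w i + t).im) (k : σ) : 0 < ((w + Pi.single i t : σ → ℂ) k).im := by
  by_cases h : k = i
  · subst h; simpa using ht
  · simpa [h] using hw k

theorem im_pdiff_div_neg {F : (σ → ℂ) → ℂ} (hF : Multiaffine F)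
    (hs : ∀ w : σ → ℂ, (∀ i, 0 < (w i).im) → F w ≠ 0) {w : σ → ℂ} (hw : ∀ i, 0 < (w i).im)
    {i : σ} (hi : pdiff i F w ≠ 0) : (pdiff i F w / F w).im < 0 := by
  have h1 : ¬ 0 < (w i + -(F w / pdiff i F w)).im := by
    intro h
    refine hs _ (im_add_single_pos hw h) ?_
    rw [hF]
    field_simp
    ring
  have h2 : 0 < (F w / pdiff i F w).im := by
    have := hw i
    simp only [Complex.add_im, Complex.neg_im] at h1
    linarith
  rw [← inv_div, Complex.inv_im]
  have : F w / pdiff i F w ≠ 0 := by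
    intro h; simp [h] at h2
  exact div_neg_of_neg_of_pos (by linarith) (Complex.normSq_pos.2 this)

theorem pdiff_pdiff_eq_zero {F : (σ → ℂ) → ℂ} (hF : Multiaffine F)
    (hs : ∀ w : σ → ℂ, (∀ i, 0 < (w i).im) → F w ≠ 0) {w : σ → ℂ} (hw : ∀ i, 0 < (w i).im)
    {i : σ} (hi : pdiff i F w = 0) (j : σ) : pdiff j (pdiff i F) w = 0 := by
  by_cases hij : i = j
  · subst hij; simp [hF.pdiff_self]
  by_contra hd
  set d := pdiff j (pdiff i F) w with hdd
  set C := pdiff j F w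
  set A := F w
  obtain ⟨R, hR⟩ := exists_gt (max (max (C / d).im 0) ((-(A / d * Complex.I).im) / (w j).im))
  have hR1 : (C / d).im < R := lt_of_le_of_lt (le_trans (le_max_left _ _) (le_max_left _ _)) hR
  have hR0 : 0 < R := lt_of_le_of_lt (le_trans (le_max_right _ _) (le_max_left _ _)) hR
  have hR2 : -(A / d * Complex.I).im < R * (w j).im := by
    rw [← div_lt_iff₀ (hw j)]
    exact lt_of_le_of_lt (le_max_right _ _) hR
  have hRc : (R : ℂ) ≠ 0 := by exact_mod_cast hR0.ne'
  set U : ℂ := A / d * Complex.I / R with hU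
  set Y : ℂ := R * Complex.I - C / d with hY
  have hUim : 0 < (w j + U).im := by
    rw [Complex.add_im, hU, Complex.div_ofReal_im]
    rw [← sub_neg_eq_add, sub_pos, ← neg_div, div_lt_iff₀ hR0]
    linarith
  have hw1 := im_add_single_pos hw hUim
  have hYim : 0 < ((w + Pi.single j U : σ → ℂ) i + Y).im := by
    have := hw1 i
    rw [Complex.add_im, hY]
    simp only [Complex.sub_im, Complex.mul_im, Complex.ofReal_re, Complex.I_im, Complex.ofReal_im,
      Complex.I_re]
    linarith
  refine hs _ (im_add_single_pos hw1 hYim) ?_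
  rw [hF, hF, hF.pdiff i, hi, ← hdd, hU, hY]
  field_simp
  ring_nf
  simp [A, C]
  ring

theorem pdiff_eq_zero_of_eq_zero [Fintype σ] {F : (σ → ℂ) → ℂ} (hF : Multiaffine F)
    (hs : ∀ w : σ → ℂ, (∀ i, 0 < (w i).im) → F w ≠ 0) {w : σ → ℂ} (hw : ∀ i, 0 < (w i).im)
    {i : σ} (hi : pdiff i F w = 0) (v : σ → ℂ) (hv : ∀ i, 0 < (v i).im) : pdiff i F v = 0 := by
  suffices h : ∀ s : Finset σ, pdiff i F (s.piecewise v w) = 0 by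
    simpa using h Finset.univ
  intro s
  induction s using Finset.induction_on with
  | empty => simpa using hi
  | insert j s hj ih =>
    have h1 : ∀ k, 0 < ((s.piecewise v w) k).im := by
      intro k
      by_cases hk : k ∈ s <;> simp [hk, hv, hw]
    have h2 : (insert j s).piecewise v w = s.piecewise v w + Pi.single j (v j - w j) := by
      funext k
      by_cases hk : k = j
      · subst hk; simp [hj]
      · by_cases hks : k ∈ s <;> simp [hk, hks]
    rw [h2, hF.pdiff i, ih, pdiff_pdiff_eq_zero hF hs h1 ih]
    simp

theorem pdiff_eq_zero_of_forall {F : (σ → ℂ) → ℂ}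
    (hs : ∀ w : σ → ℂ, (∀ i, 0 < (w i).im) → F w = 0) {w : σ → ℂ} (hw : ∀ i, 0 < (w i).im)
    (i : σ) : pdiff i F w = 0 := by
  rw [pdiff, hs w hw, hs, sub_zero]
  exact im_add_single_pos hw (i := i) (t := 1) (by simpa using hw i)

theorem StableMultiaffine.pdiff_add_pdiff [Fintype σ] {G : (σ → ℝ) → ℝ} (h : StableMultiaffine G)
    (i j : σ) :
    StableMultiaffine (pdiff i G + pdiff j G) := by
  obtain ⟨F, hF⟩ := h
  refine ⟨pdiff i F + pdiff j F, (continuous_pdiff hF.continuous i).add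
    (continuous_pdiff hF.continuous j), (hF.multiaffine.pdiff i).add (hF.multiaffine.pdiff j),
    fun w => by simp [hF.ofReal_pdiff], ?_⟩
  rcases hF.stable with hs | hs
  · by_cases hz : ∃ w : σ → ℂ, (∀ i, 0 < (w i).im) ∧ (pdiff i F + pdiff j F) w = 0
    · right
      obtain ⟨w, hw, hw0⟩ := hz
      have key : pdiff i F w = 0 := by
        by_contra hi
        have h1 := im_pdiff_div_neg hF.multiaffine hs hw hi
        have h2 : pdiff j F w = - pdiff i F w := by
          rw [Pi.add_apply] at hw0
          linear_combination hw0
        have h3 := im_pdiff_div_neg hF.multiaffine hs hw (i := j) (by simpa [h2] using hi)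
        rw [h2, neg_div, Complex.neg_im] at h3
        linarith
      have key2 : pdiff j F w = 0 := by simpa [key] using hw0
      intro v hv
      simp [pdiff_eq_zero_of_eq_zero hF.multiaffine hs hw key v hv,
        pdiff_eq_zero_of_eq_zero hF.multiaffine hs hw key2 v hv]
    · left
      push Not at hz
      exact hz
  · right
    intro w hw
    simp [pdiff_eq_zero_of_forall hs hw]

/-- The Rayleigh inequality for multiaffine real stable polynomials. -/
theorem StableMultiaffine.rayleigh {G : (σ → ℝ) → ℝ} (h : StableMultiaffine G) (i j : σ)
    (w : σ → ℝ) : G w * pdiff i (pdiff j G) w ≤ pdiff i G w * pdiff j G w := by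
  obtain ⟨F, hF⟩ := h
  have hpc := hF.multiaffine
  by_contra! hlt
  by_cases hij : i = j
  · subst hij
    rw [(StableMultiaffine.multiaffine ⟨F, hF⟩).pdiff_self i] at hlt
    have := mul_self_nonneg (pdiff i G w)
    simp at hlt
    linarith
  set u : ℝ → σ → ℂ := fun η k => w k + η * Complex.I with hu
  have huc : Continuous u := by fun_prop
  have hu0 : u 0 = fun k => (w k : ℂ) := by simp [hu]
  have huim : ∀ η > 0, ∀ k, 0 < (u η k).im := by intro η hη k; simpa [hu] using hη
  have hr : pdiff i (pdiff j F) (fun k => (w k : ℂ)) = pdiff i (pdiff j G) w := by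
    have e := ofReal_add_single w i 1
    rw [Complex.ofReal_one] at e
    rw [pdiff, ← e, hF.ofReal_pdiff, hF.ofReal_pdiff, ← Complex.ofReal_sub]
    rfl
  set a := G w
  set b := pdiff i G w
  set c := pdiff j G w
  set d := pdiff i (pdiff j G) w
  let num : ℝ → ℂ := fun η => F (u η) + Complex.I * pdiff i F (u η)
  let den : ℝ → ℂ := fun η => pdiff j F (u η) + Complex.I * pdiff i (pdiff j F) (u η)
  have hnumc : Continuous num := by
    have := (continuous_pdiff hF.continuous i).comp huc
    have := hF.continuous.comp huc
    exact this.add (continuous_const.mul ‹Continuous (pdiff i F ∘ u)›)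
  have hdenc : Continuous den := by
    have := (continuous_pdiff hF.continuous j).comp huc
    have := (continuous_pdiff (continuous_pdiff hF.continuous j) i).comp huc
    exact ‹Continuous (pdiff j F ∘ u)›.add (continuous_const.mul this)
  have hnum0 : num 0 = a + Complex.I * b := by simp [num, hu0, hF.ofReal, hF.ofReal_pdiff, a, b]
  have hden0 : den 0 = c + Complex.I * d := by simp [den, hu0, hr, hF.ofReal_pdiff, c, d]
  have hden_ne : den 0 ≠ 0 := by
    rw [hden0]
    intro h0
    have h1 := congrArg Complex.re h0
    have h2 := congrArg Complex.im h0
    simp at h1 h2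
    rw [h1, h2] at hlt
    simp at hlt
  have him0 : 0 < (-(num 0 / den 0)).im := by
    rw [hnum0, hden0, Complex.neg_im, Complex.div_im]
    rw [hden0] at hden_ne
    have hn := Complex.normSq_pos.2 hden_ne
    simp
    rw [div_lt_div_iff_of_pos_right hn]
    linarith
  have hct : ContinuousAt (fun η => (-(num η / den η)).im) 0 :=
    Complex.continuous_im.continuousAt.comp
      ((hnumc.continuousAt.div hdenc.continuousAt hden_ne).neg)
  have hev := (hct.eventually (lt_mem_nhds him0)).and
    (hdenc.continuousAt.eventually_ne hden_ne)
  obtain ⟨r, hr0, hrr⟩ := Metric.eventually_nhds_iff.1 hev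
  obtain ⟨him, hne⟩ := hrr (y := r / 2) (by rw [Real.dist_eq, sub_zero, abs_of_pos] <;> linarith)
  have hη : 0 < r / 2 := by linarith
  have hIm : 0 < (u (r / 2) i + Complex.I).im := by
    have := huim _ hη i
    simp only [Complex.add_im, Complex.I_im]; linarith
  have hw1 := im_add_single_pos (huim _ hη) hIm
  have hw2 := im_add_single_pos hw1 (i := j) (t := -(num (r / 2) / den (r / 2))) (by
    have := hw1 j
    rw [Complex.add_im]; linarith)
  rcases hF.stable with hs | hs
  · refine hs _ hw2 ?_
    rw [hpc, hpc, hpc.pdiff j]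
    change num (r / 2) + -(num (r / 2) / den (r / 2)) * den (r / 2) = 0
    field_simp
    ring
  · have hz : Set.EqOn F 0 (closure {w : σ → ℂ | ∀ i, 0 < (w i).im}) :=
      Set.EqOn.closure (fun v hv => hs v hv) hF.continuous continuous_const
    have hz0 : ∀ v : σ → ℝ, G v = 0 := by
      intro v
      have hv : (fun k => (v k : ℂ)) ∈ closure {w : σ → ℂ | ∀ i, 0 < (w i).im} := by
        have hcv : Continuous (fun η : ℝ => fun k => (v k : ℂ) + η * Complex.I) := by fun_prop
        have := hcv.closure_preimage_subset {w : σ → ℂ | ∀ i, 0 < (w i).im}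
        have h0 : (0 : ℝ) ∈ closure ((fun η : ℝ => fun k => (v k : ℂ) + η * Complex.I) ⁻¹'
            {w : σ → ℂ | ∀ i, 0 < (w i).im}) := by
          refine closure_mono (s := Set.Ioi 0) ?_ ?_
          · intro η hη k
            simpa using hη
          · simp
        simpa using this h0
      have := hz hv
      rw [hF.ofReal] at this
      exact Complex.ofReal_eq_zero.1 this
    have : a = 0 := hz0 w
    have hb : b = 0 := by simp [b, pdiff, hz0]
    rw [this, hb] at hlt
    simp at hlt

theorem StableMultiaffine.pdiff [Fintype σ] {G : (σ → ℝ) → ℝ}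
    (h : StableMultiaffine G) (i : σ) : StableMultiaffine (pdiff i G) := by
  obtain ⟨F, hF⟩ := h
  refine ⟨_root_.pdiff i F, continuous_pdiff hF.continuous i, hF.multiaffine.pdiff i,
    hF.ofReal_pdiff i, ?_⟩
  rcases hF.stable with hs | hs
  · by_cases hz : ∃ w : σ → ℂ, (∀ i, 0 < (w i).im) ∧ _root_.pdiff i F w = 0
    · obtain ⟨w, hw, hw0⟩ := hz
      exact Or.inr (pdiff_eq_zero_of_eq_zero hF.multiaffine hs hw hw0)
    · push Not at hz
      exact Or.inl hz
  · exact Or.inr fun w hw => pdiff_eq_zero_of_forall hs hw i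

end Stability

section Barrier

variable {σ : Type*}

/-- `G` is positive on the orthant with apex `a`. -/
def PositiveAbove (G : (σ → ℝ) → ℝ) (a : σ → ℝ) : Prop := ∀ w, a ≤ w → 0 < G w

/-- `G` is nonnegative on the orthant with apex `a`. -/
def NonnegAbove (G : (σ → ℝ) → ℝ) (a : σ → ℝ) : Prop := ∀ w, a ≤ w → 0 ≤ G w

theorem PositiveAbove.nonnegAbove {G : (σ → ℝ) → ℝ} {a : σ → ℝ} (h : PositiveAbove G a) :
    NonnegAbove G a := fun w hw => (h w hw).le

theorem NonnegAbove.mono {G : (σ → ℝ) → ℝ} {a b : σ → ℝ} (h : NonnegAbove G a) (hab : a ≤ b) :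
    NonnegAbove G b := fun w hw => h w (hab.trans hw)

theorem PositiveAbove.mono {G : (σ → ℝ) → ℝ} {a b : σ → ℝ} (h : PositiveAbove G a)
    (hab : a ≤ b) : PositiveAbove G b := fun w hw => h w (hab.trans hw)

variable [DecidableEq σ]

theorem le_add_single (w : σ → ℝ) (i : σ) {t : ℝ} (ht : 0 ≤ t) : w ≤ w + Pi.single i t :=
  le_add_of_nonneg_right (Pi.single_nonneg.2 ht)

theorem NonnegAbove.pdiff {G : (σ → ℝ) → ℝ} {a : σ → ℝ} (h : NonnegAbove G a)
    (hG : Multiaffine G) (i : σ) : NonnegAbove (pdiff i G) a := by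
  intro w hw
  by_contra! hlt
  have h0 := h w hw
  have ht : 0 ≤ (G w + 1) / -_root_.pdiff i G w := by
    apply div_nonneg <;> linarith
  have := h _ (hw.trans (le_add_single w i ht))
  rw [hG] at this
  have e : (G w + 1) / -_root_.pdiff i G w * _root_.pdiff i G w = -(G w + 1) := by
    have hne := hlt.ne
    field_simp
  linarith

/-- A function that does not increase along coordinate steps inside a box is larger at the lower
corner than at the upper corner. -/
theorem le_of_coordinate_steps [Fintype σ] {φ : (σ → ℝ) → ℝ} {a w : σ → ℝ} (haw : a ≤ w)
    (h : ∀ v, a ≤ v → ∀ i t, 0 ≤ t → v + Pi.single i t ≤ w → φ (v + Pi.single i t) ≤ φ v) :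
    φ w ≤ φ a := by
  suffices hs : ∀ s : Finset σ, φ (s.piecewise w a) ≤ φ a by simpa using hs Finset.univ
  intro s
  induction s using Finset.induction_on with
  | empty => simp
  | insert j s hj ih =>
    have h2 : (insert j s).piecewise w a = s.piecewise w a + Pi.single j (w j - a j) := by
      funext k
      by_cases hk : k = j
      · subst hk; simp [hj]
      · by_cases hks : k ∈ s <;> simp [hk, hks]
    have h3 : s.piecewise w a + Pi.single j (w j - a j) ≤ w := by
      rw [← h2]
      exact Finset.piecewise_le_of_le_of_le _ le_rfl haw
    rw [h2]
    exact (h _ (Finset.le_piecewise_of_le_of_le _ haw le_rfl) j _ (sub_nonneg.2 (haw j)) h3).trans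
      ih

/-- A multiaffine function vanishing on an orthant vanishes everywhere. -/
theorem Multiaffine.eq_zero_of_above [Fintype σ] {G : (σ → ℝ) → ℝ} (hG : Multiaffine G)
    {a : σ → ℝ} (h : ∀ w, a ≤ w → G w = 0) : G = 0 := by
  suffices hs : ∀ s : Finset σ, ∀ w : σ → ℝ, (∀ i ∉ s, a i ≤ w i) → G w = 0 by
    funext w
    exact hs Finset.univ w (by simp)
  intro s
  induction s using Finset.induction_on with
  | empty => exact fun w hw => h w fun i => hw i (by simp)
  | insert j s hj ih =>
    intro w hw
    have hv : ∀ t, a j ≤ w j + t → G (w + Pi.single j t) = 0 := by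
      intro t ht
      apply ih
      intro i hi
      by_cases hij : i = j
      · subst hij; simpa using ht
      · simpa [hij] using hw i (by simp [hij, hi])
    have h0 := hv (a j - w j) (by linarith)
    have h1 := hv (a j - w j + 1) (by linarith)
    rw [hG] at h0 h1
    have : _root_.pdiff j G w = 0 := by linarith
    simpa [this] using h0

theorem pdiff_div_step {G : (σ → ℝ) → ℝ} [Fintype σ] (hG : StableMultiaffine G) {v : σ → ℝ}
    {i j : σ} {t : ℝ} (ht : 0 ≤ t) (h : 0 < G (v + Pi.single j t) * G v) :
    pdiff i G (v + Pi.single j t) / G (v + Pi.single j t) ≤ pdiff i G v / G v := by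
  have hR := hG.rayleigh j i v
  have e1 := hG.multiaffine v j t
  have e2 := hG.multiaffine.pdiff i v j t
  have hne1 : G (v + Pi.single j t) ≠ 0 := left_ne_zero_of_mul h.ne'
  have hne2 : G v ≠ 0 := right_ne_zero_of_mul h.ne'
  rw [← sub_nonneg, div_sub_div _ _ hne2 hne1]
  apply div_nonneg _ (by linarith)
  rw [e1, e2]
  nlinarith [mul_nonneg ht (sub_nonneg.2 hR)]

/-- The barrier function is antitone above the zeros. -/
theorem PositiveAbove.pdiff_div_anti [Fintype σ] {G : (σ → ℝ) → ℝ} {a : σ → ℝ}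
    (h : PositiveAbove G a) (hG : StableMultiaffine G) (i : σ) {w : σ → ℝ} (hw : a ≤ w) :
    pdiff i G w / G w ≤ pdiff i G a / G a :=
  le_of_coordinate_steps (φ := fun w => pdiff i G w / G w) hw
    fun v hv _ _ ht _ => pdiff_div_step hG ht
    (mul_pos (h _ (hv.trans (le_add_single _ _ ht))) (h v hv))

theorem hyperdeterminant_bound {p f g h p' f' g' h' : ℝ}
    (hW : ∀ U : ℝ, 0 ≤ (f + U * f') * (g + U * g') - (p + U * p') * (h + U * h'))
    (hp : 0 < p) (hf : 0 ≤ f) (hg : 0 ≤ g) (hh : 0 ≤ h)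
    (hA : 0 ≤ f * p' - p * f') (hB : 0 ≤ g * p' - p * g') :
    p * (h * p' - p * h') ≤ (f + g) * ((f * p' - p * f') + (g * p' - p * g')) := by
  set A := f * p' - p * f' with hAdef
  set B := g * p' - p * g' with hBdef
  set K := h * p' - p * h' with hKdef
  have hd : discrim (f' * g' - p' * h') (f * g' + f' * g - p * h' - p' * h)
      (f * g - p * h) ≤ 0 := by
    apply discrim_le_zero
    intro U
    have := hW U
    nlinarith
  have hM : (f * B + g * A - p * K) ^ 2 ≤ 4 * (f * g - p * h) * (A * B) := by
    have e : (f * B + g * A - p * K) ^ 2 - 4 * (f * g - p * h) * (A * B) = p ^ 2 *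
        discrim (f' * g' - p' * h') (f * g' + f' * g - p * h' - p' * h) (f * g - p * h) := by
      rw [discrim, hAdef, hBdef, hKdef]; ring
    have := mul_nonpos_of_nonneg_of_nonpos (sq_nonneg p) hd
    linarith
  have hM2 : (f * B + g * A - p * K) ^ 2 ≤ (f * A + g * B) ^ 2 := by
    have h1 : 0 ≤ p * h * (A * B) := by positivity
    nlinarith [sq_nonneg (f * A - g * B)]
  have hpos : 0 ≤ f * A + g * B := by positivity
  have := abs_le_of_sq_le_sq hM2 hpos
  linarith [(abs_le.1 this).1, this]

theorem pdiff_sub_single_sub_single {p : (σ → ℝ) → ℝ} (hp : Multiaffine p) (y z : σ)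
    (w : σ → ℝ) (δ₁ δ₂ : ℝ) :
    (pdiff y p + pdiff z p) (w - Pi.single y δ₁ - Pi.single z δ₂) =
      pdiff y p w + pdiff z p w - (δ₁ + δ₂) * pdiff y (pdiff z p) w := by
  have e : w - Pi.single y δ₁ - Pi.single z δ₂ = w + Pi.single y (-δ₁) + Pi.single z (-δ₂) := by
    simp only [Pi.single_neg]; abel
  have h1 := congrFun (hp.pdiff_self y) w
  have h2 := congrFun (hp.pdiff_self z) w
  have h5 : pdiff y (pdiff z (pdiff y p)) w = 0 := by
    rw [pdiff_comm y z, hp.pdiff_self y]; simp [pdiff]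
  have h6 : pdiff y (pdiff z (pdiff z p)) w = 0 := by rw [hp.pdiff_self z]; simp [pdiff]
  rw [e, ((hp.pdiff y).add (hp.pdiff z)), pdiff_add]
  simp only [Pi.add_apply]
  rw [hp.pdiff y, hp.pdiff z, (hp.pdiff y).pdiff z, (hp.pdiff z).pdiff z, h2, h1,
    h5, h6, pdiff_comm z y]
  simp
  ring

/-- One step of the barrier method: applying `∂_y + ∂_z` and moving down by `δ₁` and `δ₂` in the
directions `y` and `z` preserves positivity and does not increase the other barriers. -/
theorem barrier_step [Fintype σ] {p : (σ → ℝ) → ℝ} {a : σ → ℝ} (hp : StableMultiaffine p)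
    (ha : PositiveAbove p a) (y z : σ) {δ₁ δ₂ : ℝ} (hδ₁ : 0 ≤ δ₁) (hδ₂ : 0 ≤ δ₂)
    (hb : (pdiff y p a + pdiff z p a) * (δ₁ + δ₂) ≤ p a) (hq : pdiff y p + pdiff z p ≠ 0) :
    PositiveAbove (pdiff y p + pdiff z p) (a - Pi.single y δ₁ - Pi.single z δ₂) ∧
    ∀ u, pdiff u (pdiff y p + pdiff z p) (a - Pi.single y δ₁ - Pi.single z δ₂) * p a ≤
      pdiff u p a * (pdiff y p + pdiff z p) (a - Pi.single y δ₁ - Pi.single z δ₂) := by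
  have hm := hp.multiaffine
  have hnn := fun i => ha.nonnegAbove.pdiff hm i
  constructor
  · intro v hv
    obtain ⟨w, rfl⟩ : ∃ w, v = w - Pi.single y δ₁ - Pi.single z δ₂ :=
      ⟨v + Pi.single y δ₁ + Pi.single z δ₂, by abel⟩
    have hw : a ≤ w := by simpa using hv
    rw [pdiff_sub_single_sub_single hm]
    have hpw := ha w hw
    have hf := hnn y w hw
    have hg := hnn z w hw
    have hR := hp.rayleigh y z w
    have hbw : (pdiff y p w + pdiff z p w) * (δ₁ + δ₂) ≤ p w := by
      have h1 := ha.pdiff_div_anti hp y hw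
      have h2 := ha.pdiff_div_anti hp z hw
      have h3 : (pdiff y p a + pdiff z p a) / p a * (δ₁ + δ₂) ≤ 1 := by
        rw [div_mul_eq_mul_div, div_le_one (ha a le_rfl)]; exact hb
      have h4 : (pdiff y p w + pdiff z p w) / p w * (δ₁ + δ₂) ≤ 1 := by
        refine le_trans ?_ h3
        apply mul_le_mul_of_nonneg_right _ (by positivity)
        rw [add_div, add_div]; linarith
      rwa [div_mul_eq_mul_div, div_le_one hpw] at h4
    rcases (add_nonneg hf hg).eq_or_lt with h0 | hpos
    · exfalso
      apply hq
      refine (Multiaffine.add (hm.pdiff y) (hm.pdiff z)).eq_zero_of_above (a := w) ?_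
      have hz : ∀ i, pdiff i p w = 0 → ∀ v, w ≤ v → pdiff i p v = 0 := by
        intro i hi v hv
        have h1 := (ha.mono hw).pdiff_div_anti hp i hv
        rw [hi, zero_div] at h1
        have h2 := ha v (hw.trans hv)
        have h3 : pdiff i p v ≤ 0 := by
          by_contra! h; linarith [div_pos h h2]
        exact le_antisymm h3 (hnn i v (hw.trans hv))
      intro v hv
      rw [Pi.add_apply, hz y (by linarith) v hv, hz z (by linarith) v hv, add_zero]
    · rw [sub_pos]
      set f := pdiff y p w
      set g := pdiff z p w
      set h := pdiff y (pdiff z p) w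
      have hh : 0 ≤ h := (hnn z).pdiff (hm.pdiff z) y w hw
      have h1 : (δ₁ + δ₂) * h * (f + g) ≤ f * g := by nlinarith
      have h2 : f * g < (f + g) * (f + g) := by nlinarith [mul_pos hpos hpos, mul_nonneg hf hg]
      exact lt_of_mul_lt_mul_right (h1.trans_lt h2) hpos.le
  · intro u
    have hA := hp.rayleigh u y a
    have hB := hp.rayleigh u z a
    have hpa := ha a le_rfl
    have hf := hnn y a le_rfl
    have hg := hnn z a le_rfl
    have hh : 0 ≤ pdiff y (pdiff z p) a := (hnn z).pdiff (hm.pdiff z) y a le_rfl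
    have e : pdiff u (pdiff y p + pdiff z p) = pdiff y (pdiff u p) + pdiff z (pdiff u p) := by
      rw [pdiff_add, pdiff_comm u y, pdiff_comm u z]
    rw [e, pdiff_sub_single_sub_single hm, pdiff_sub_single_sub_single (hm.pdiff u)]
    have e2 : pdiff y (pdiff z (pdiff u p)) = pdiff u (pdiff y (pdiff z p)) := by
      rw [pdiff_comm z u, pdiff_comm y u]
    rw [e2, pdiff_comm y u, pdiff_comm z u]
    have key := hyperdeterminant_bound (p := p a) (f := pdiff y p a) (g := pdiff z p a)
      (h := pdiff y (pdiff z p) a) (p' := pdiff u p a) (f' := pdiff u (pdiff y p) a)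
      (g' := pdiff u (pdiff z p) a) (h' := pdiff u (pdiff y (pdiff z p)) a) (by
        intro U
        have := hp.rayleigh y z (a + Pi.single u U)
        rw [hm, hm.pdiff y, hm.pdiff z, (hm.pdiff z).pdiff y] at this
        linarith) hpa hf hg hh (by linarith) (by linarith)
    set f := pdiff y p a
    set g := pdiff z p a
    set h := pdiff y (pdiff z p) a
    set p' := pdiff u p a
    set f' := pdiff u (pdiff y p) a
    set g' := pdiff u (pdiff z p) a
    set h' := pdiff u (pdiff y (pdiff z p)) a
    have hAB : 0 ≤ (f * p' - p a * f') + (g * p' - p a * g') := by linarith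
    have h1 := mul_le_mul_of_nonneg_right hb hAB
    have h2 := mul_le_mul_of_nonneg_right key (add_nonneg hδ₁ hδ₂)
    have h3 : p a * ((h * p' - p a * h') * (δ₁ + δ₂)) ≤
        p a * ((f * p' - p a * f') + (g * p' - p a * g')) := by linarith
    have h4 := le_of_mul_le_mul_left h3 hpa
    linarith

end Barrier

section Selection

variable {σ : Type*} [DecidableEq σ] [Fintype σ]

theorem PositiveAbove.ratio_mono {p q : (σ → ℝ) → ℝ} {b v w : σ → ℝ} (hp : StableMultiaffine p)
    {y z : σ} (hq : q = pdiff y p + pdiff z p) (hb : PositiveAbove q b) (hv : b ≤ v)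
    (hw : v ≤ w) : p v / q v ≤ p w / q w := by
  have hm := hp.multiaffine
  have hqm : Multiaffine q := hq ▸ (hm.pdiff y).add (hm.pdiff z)
  suffices h : -(p w / q w) ≤ -(p v / q v) by linarith
  refine le_of_coordinate_steps (φ := fun w => -(p w / q w)) hw fun x hx i t ht _ => ?_
  have h1 := hb x (hv.trans hx)
  have h2 := hb _ ((hv.trans hx).trans (le_add_single x i ht))
  rw [neg_le_neg_iff, div_le_div_iff₀ h1 h2, hm, hqm]
  have e : pdiff i q x = pdiff i (pdiff y p) x + pdiff i (pdiff z p) x := by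
    rw [hq, pdiff_add]; rfl
  have e2 : q x = pdiff y p x + pdiff z p x := by rw [hq]; rfl
  have hR1 := hp.rayleigh i y x
  have hR2 := hp.rayleigh i z x
  have : 0 ≤ t * (pdiff i p x * q x - p x * pdiff i q x) := by
    apply mul_nonneg ht
    rw [e, e2]; linarith
  linarith

theorem pdiff_nonpos_or_eq_zero {p q : (σ → ℝ) → ℝ} {b : σ → ℝ} {τ : ℝ} (hτ : 0 < τ)
    (hp : StableMultiaffine p) {y z : σ} (hq : q = pdiff y p + pdiff z p)
    (hb : PositiveAbove q (fun i => b i - τ)) {w : σ → ℝ} (hw : b ≤ w) (hf : pdiff y p w ≤ 0) :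
    pdiff y p (fun i => b i - τ) ≤ 0 ∨ pdiff y p = 0 := by
  have hm := hp.multiaffine
  set c : σ → ℝ := fun i => b i - τ
  have hcb : c ≤ b := fun i => by simp only [c]; linarith
  have hratio : ∀ v w, c ≤ v → v ≤ w → p v / q v ≤ p w / q w := fun v w h1 h2 =>
    PositiveAbove.ratio_mono hp hq hb h1 h2
  have hpos : ∀ v w, c ≤ v → v ≤ w → 0 < p v → 0 < p w := by
    intro v w h1 h2 h3
    have h4 := hb v h1
    have h5 := hb w (h1.trans h2)
    by_contra! h6
    have := hratio v w h1 h2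
    have h7 := div_pos h3 h4
    have h8 := div_nonpos_of_nonpos_of_nonneg h6 h5.le
    linarith
  have hnonneg : ∀ v w, c ≤ v → v ≤ w → 0 ≤ p v → 0 ≤ p w := by
    intro v w h1 h2 h3
    have h4 := hb v h1
    have h5 := hb w (h1.trans h2)
    by_contra! h6
    have := hratio v w h1 h2
    have h7 := div_nonneg h3 h4.le
    have h8 := div_neg_of_neg_of_pos h6 h5
    linarith
  have hneg : ∀ v, c ≤ v → p v < 0 → pdiff y p v ≤ 0 → pdiff y p c ≤ 0 := by
    intro v hv hpv hfv
    have hlt : ∀ x, c ≤ x → x ≤ v → p x < 0 := by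
      intro x h1 h2
      by_contra! h3
      linarith [hnonneg x v h1 h2 h3]
    have h1 : pdiff y p v / p v ≤ pdiff y p c / p c :=
      le_of_coordinate_steps (φ := fun w => pdiff y p w / p w) hv fun x hx i t ht hxt =>
        pdiff_div_step hp ht (mul_pos_of_neg_of_neg
          (hlt _ (hx.trans (le_add_single x i ht)) hxt)
          (hlt x hx ((le_add_single x i ht).trans hxt)))
    have h2 := div_nonneg_of_nonpos hfv hpv.le
    by_contra! h3
    linarith [div_neg_of_pos_of_neg h3 (hlt c le_rfl hv)]
  have hcw := hcb.trans hw
  rcases lt_or_ge (p w) 0 with hpw | hpw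
  · exact Or.inl (hneg w hcw hpw hf)
  have hnn : NonnegAbove p w := fun v hv => hnonneg w v hcw hv hpw
  have hf0 : pdiff y p w = 0 := le_antisymm hf (hnn.pdiff hm y w le_rfl)
  rcases hpw.eq_or_lt with hpw | hpw
  · left
    have hg : 0 < pdiff z p w := by
      have := hb w hcw
      rw [hq, Pi.add_apply, hf0, zero_add] at this
      exact this
    have hh : 0 ≤ pdiff z (pdiff y p) w := (hnn.pdiff hm y).pdiff (hm.pdiff y) z w le_rfl
    apply hneg (w + Pi.single z (-τ))
    · intro i
      have := hw i
      by_cases hi : i = z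
      · subst hi
        simp only [c, Pi.add_apply, Pi.single_eq_same]; linarith
      · simp only [c, Pi.add_apply, Pi.single_eq_of_ne hi]; linarith
    · rw [hm, ← hpw]; nlinarith
    · rw [hm.pdiff y, hf0]; nlinarith
  · right
    have ha : PositiveAbove p w := fun v hv => hpos w v hcw hv hpw
    refine (hm.pdiff y).eq_zero_of_above (a := w) fun v hv => ?_
    have h1 := ha.pdiff_div_anti hp y hv
    rw [hf0, zero_div] at h1
    have h3 : pdiff y p v ≤ 0 := by
      by_contra! h; linarith [div_pos h (ha v hv)]
    exact le_antisymm h3 (hnn.pdiff hm y v hv)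

/-- If `∂_y p + ∂_z p` has no zeros above `b - τ`, then one of `∂_y p`, `∂_z p` has no zeros
above `b`. -/
theorem positiveAbove_pdiff_or {p : (σ → ℝ) → ℝ} {b : σ → ℝ} {τ : ℝ} (hτ : 0 < τ)
    (hp : StableMultiaffine p) {y z : σ}
    (hb : PositiveAbove (pdiff y p + pdiff z p) (fun i => b i - τ)) :
    PositiveAbove (pdiff y p) b ∨ PositiveAbove (pdiff z p) b := by
  by_contra! h
  obtain ⟨hy, hz⟩ := h
  have hcb : (fun i => b i - τ) ≤ b := fun i => by simp only; linarith
  have hy' := hy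
  have hz' := hz
  simp only [PositiveAbove, not_forall, not_lt] at hy hz
  obtain ⟨w₁, hw₁, hf⟩ := hy
  obtain ⟨w₂, hw₂, hg⟩ := hz
  have hb2 := hb
  rw [add_comm] at hb2
  rcases pdiff_nonpos_or_eq_zero hτ hp rfl hb hw₁ hf with h1 | h1
  · rcases pdiff_nonpos_or_eq_zero hτ hp rfl hb2 hw₂ hg with h2 | h2
    · have := hb _ le_rfl
      rw [Pi.add_apply] at this
      linarith
    · rw [h2, add_zero] at hb
      exact hy' (hb.mono hcb)
  · rw [h1, zero_add] at hb
    exact hz' (hb.mono hcb)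

end Selection

section IteratedSum

variable {ι : Type*} [DecidableEq ι]

/-- The composition of the operators `∂_{inl i} + ∂_{inr i}` for `i` in the list `l`. -/
def iterSum {K : Type*} [Field K] : List ι → ((ι ⊕ ι → K) → K) → (ι ⊕ ι → K) → K
  | [], G => G
  | i :: l, G => iterSum l (pdiff (.inl i) G + pdiff (.inr i) G)

variable {F G : (ι ⊕ ι → ℝ) → ℝ}

theorem pdiff_zero {σ K : Type*} [DecidableEq σ] [Field K] (i : σ) :
    pdiff i (0 : (σ → K) → K) = 0 := by
  funext w; simp [pdiff]

theorem iterSum_zero (l : List ι) : iterSum l (0 : (ι ⊕ ι → ℝ) → ℝ) = 0 := by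
  induction l with
  | nil => rfl
  | cons i l ih => rw [iterSum, pdiff_zero, pdiff_zero, add_zero, ih]

theorem iterSum_add (l : List ι) (F G : (ι ⊕ ι → ℝ) → ℝ) :
    iterSum l (F + G) = iterSum l F + iterSum l G := by
  induction l generalizing F G with
  | nil => rfl
  | cons i l ih => simp only [iterSum, pdiff_add, ih]; abel

theorem pdiff_iterSum (k : ι ⊕ ι) (l : List ι) (G : (ι ⊕ ι → ℝ) → ℝ) :
    pdiff k (iterSum l G) = iterSum l (pdiff k G) := by
  induction l generalizing G with
  | nil => rfl
  | cons i l ih => rw [iterSum, ih, pdiff_add, pdiff_comm k, pdiff_comm k, iterSum]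

theorem StableMultiaffine.iterSum [Fintype ι] (l : List ι) (hG : StableMultiaffine G) :
    StableMultiaffine (iterSum l G) := by
  induction l generalizing G with
  | nil => exact hG
  | cons i l ih => exact ih (hG.pdiff_add_pdiff _ _)

theorem NonnegAbove.iterSum {a : ι ⊕ ι → ℝ} (l : List ι) (h : NonnegAbove G a)
    (hG : Multiaffine G) : NonnegAbove (iterSum l G) a := by
  induction l generalizing G with
  | nil => exact h
  | cons i l ih =>
    exact ih (fun w hw => add_nonneg (h.pdiff hG _ w hw) (h.pdiff hG _ w hw))
      ((hG.pdiff _).add (hG.pdiff _))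

/-- The point `a` moved down by `δ₁` and `δ₂` in the two copies of the coordinates listed
in `l`. -/
def lowered (l : List ι) (δ₁ δ₂ : ℝ) (a : ι ⊕ ι → ℝ) : ι ⊕ ι → ℝ :=
  fun k => a k - if Sum.elim id id k ∈ l then Sum.elim (fun _ => δ₁) (fun _ => δ₂) k else 0

theorem lowered_cons {i : ι} {l : List ι} (hi : i ∉ l) (δ₁ δ₂ : ℝ) (a : ι ⊕ ι → ℝ) :
    lowered l δ₁ δ₂ (a - Pi.single (.inl i) δ₁ - Pi.single (.inr i) δ₂) =
      lowered (i :: l) δ₁ δ₂ a := by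
  funext k
  rcases k with k | k <;> by_cases hk : k = i
  · subst hk; simp [lowered, hi]
  · simp only [lowered, Pi.sub_apply]; simp [hk]; congr
  · subst hk; simp [lowered, hi]
  · simp only [lowered, Pi.sub_apply]; simp [hk]; congr

theorem positiveAbove_iterSum [Fintype ι] {l : List ι} (hl : l.Nodup) {a : ι ⊕ ι → ℝ}
    {δ₁ δ₂ : ℝ} (hδ₁ : 0 ≤ δ₁) (hδ₂ : 0 ≤ δ₂) (hG : StableMultiaffine G)
    (ha : PositiveAbove G a)
    (hb : ∀ j ∈ l, (pdiff (.inl j) G a + pdiff (.inr j) G a) * (δ₁ + δ₂) ≤ G a)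
    (hne : iterSum l G ≠ 0) : PositiveAbove (iterSum l G) (lowered l δ₁ δ₂ a) := by
  induction l generalizing G a with
  | nil =>
    have : lowered [] δ₁ δ₂ a = a := by funext k; simp [lowered]
    rwa [this]
  | cons i l ih =>
    rw [List.nodup_cons] at hl
    have hq : pdiff (.inl i) G + pdiff (.inr i) G ≠ 0 := by
      intro h
      rw [iterSum, h, iterSum_zero] at hne
      exact hne rfl
    obtain ⟨hpos, hbar⟩ := barrier_step hG ha (.inl i) (.inr i) hδ₁ hδ₂ (hb i (by simp)) hq
    rw [← lowered_cons hl.1]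
    refine ih hl.2 (hG.pdiff_add_pdiff _ _) hpos (fun j hj => ?_) hne
    have h1 := hbar (.inl j)
    have h2 := hbar (.inr j)
    have h3 := hb j (by simp [hj])
    have h4 := ha a le_rfl
    have h5 := hpos _ le_rfl
    refine le_of_mul_le_mul_right ?_ h4
    have h6 := mul_le_mul_of_nonneg_right (add_le_add h1 h2) (add_nonneg hδ₁ hδ₂)
    have h7 := mul_le_mul_of_nonneg_right h3 h5.le
    linarith

end IteratedSum

section Family

variable {ι : Type*} [DecidableEq ι] {F : Finset ι → Finset ι → (ι ⊕ ι → ℝ) → ℝ}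

/-- Applying `∂_{inl i} + ∂_{inr i}` for all `i` in `l` to a member of a family closed under the
partial derivatives; if the result has no zeros above `b - |l| τ` then some summand has no zeros
above `b`. -/
theorem exists_positiveAbove_of_iterSum [Fintype ι]
    (hinl : ∀ T U, ∀ i ∉ T, pdiff (.inl i) (F T U) = F (insert i T) U)
    (hinr : ∀ T U, ∀ i ∉ U, pdiff (.inr i) (F T U) = F T (insert i U))
    (hF : ∀ T U, StableMultiaffine (F T U)) {τ : ℝ} (hτ : 0 < τ) {b : ι ⊕ ι → ℝ}
    {l : List ι} (hl : l.Nodup) {T U : Finset ι} (hTU : ∀ i, i ∈ l → i ∉ T ∧ i ∉ U)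
    (hdisj : Disjoint T U)
    (h : PositiveAbove (iterSum l (F T U)) (fun k => b k - l.length * τ)) :
    ∃ T' U', Disjoint T' U' ∧ T' ∪ U' = T ∪ U ∪ l.toFinset ∧ PositiveAbove (F T' U') b := by
  induction l generalizing T U b with
  | nil => exact ⟨T, U, hdisj, by simp, by simpa [iterSum] using h⟩
  | cons i l ih =>
    rw [List.nodup_cons] at hl
    have hi := hTU i (by simp)
    have e : iterSum (i :: l) (F T U) =
        pdiff (.inl i) (iterSum l (F T U)) + pdiff (.inr i) (iterSum l (F T U)) := by
      rw [pdiff_iterSum, pdiff_iterSum, ← iterSum_add, iterSum]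
    rw [e] at h
    have h' := positiveAbove_pdiff_or (b := fun k => b k - l.length * τ) hτ ((hF T U).iterSum l)
      (by convert h using 2 with k; push_cast [List.length_cons]; ring)
    rw [pdiff_iterSum, pdiff_iterSum, hinl T U i hi.1, hinr T U i hi.2] at h'
    rcases h' with h' | h'
    · obtain ⟨T', U', h1, h2, h3⟩ := ih hl.2 (T := insert i T) (U := U) (fun j hj => by
        have := hTU j (by simp [hj])
        refine ⟨?_, this.2⟩
        rw [Finset.mem_insert, not_or]
        exact ⟨fun e => hl.1 (e ▸ hj), this.1⟩)
        (Finset.disjoint_insert_left.2 ⟨hi.2, hdisj⟩) h'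
      exact ⟨T', U', h1, by rw [h2]; ext; simp, h3⟩
    · obtain ⟨T', U', h1, h2, h3⟩ := ih hl.2 (T := T) (U := insert i U) (fun j hj => by
        have := hTU j (by simp [hj])
        refine ⟨this.1, ?_⟩
        rw [Finset.mem_insert, not_or]
        exact ⟨fun e => hl.1 (e ▸ hj), this.2⟩)
        (Finset.disjoint_insert_right.2 ⟨hi.1, hdisj⟩) h'
      exact ⟨T', U', h1, by rw [h2]; ext; simp, h3⟩

theorem iterSum_family_pos [Fintype ι]
    (hinl : ∀ T U, ∀ i ∉ T, pdiff (.inl i) (F T U) = F (insert i T) U)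
    (hinr : ∀ T U, ∀ i ∉ U, pdiff (.inr i) (F T U) = F T (insert i U))
    (hF : ∀ T U, Multiaffine (F T U)) {a : ι ⊕ ι → ℝ}
    (hnn : ∀ T U, NonnegAbove (F T U) a) (hpos : 0 < F ∅ Finset.univ a)
    {l : List ι} (hl : l.Nodup) {U : Finset ι} (hU : ∀ i, i ∈ l ↔ i ∉ U) :
    0 < iterSum l (F ∅ U) a := by
  induction l generalizing U with
  | nil =>
    have : U = Finset.univ := by ext i; simpa using hU i
    simpa [iterSum, this] using hpos
  | cons i l ih =>
    rw [List.nodup_cons] at hl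
    have hi := (hU i).1 (by simp)
    rw [iterSum, iterSum_add, hinl _ _ i (by simp), hinr _ _ i hi]
    refine add_pos_of_nonneg_of_pos ((hnn _ _).iterSum l (hF _ _) a le_rfl) (ih hl.2 fun j => ?_)
    have := hU j
    rw [List.mem_cons] at this
    rw [Finset.mem_insert, not_or, ← this]
    refine ⟨fun h => ⟨fun e => hl.1 (e ▸ h), Or.inr h⟩, fun h => h.2.resolve_left h.1⟩

end Family

section LinkDet

variable {ι : Type*} [DecidableEq ι]

/-- The matrix `diag z - A` with the rows in `U` replaced by those of the identity. -/
def rowMatrix (A : Matrix ι ι ℂ) (U : Finset ι) (z : ι → ℂ) : Matrix ι ι ℂ :=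
  Matrix.of fun i => if i ∈ U then (1 : Matrix ι ι ℂ) i else (Matrix.diagonal z - A) i

theorem rowMatrix_empty (A : Matrix ι ι ℂ) (z : ι → ℂ) :
    rowMatrix A ∅ z = Matrix.diagonal z - A := by
  ext i j; simp [rowMatrix]

variable [Fintype ι]

/-- The iterated partial derivative, in the directions of `T`, of the generating polynomial
of `μ`. -/
def linkPoly {K : Type*} [Field K] (μ : Finset ι → K) (T : Finset ι) (y : ι → K) : K :=
  ∑ S : Finset ι, if T ⊆ S then μ S * ∏ i ∈ S \ T, y i else 0

theorem linkPoly_add_single {K : Type*} [Field K] (μ : Finset ι → K) {T : Finset ι} (y : ι → K)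
    {i : ι} (hi : i ∉ T) (t : K) : linkPoly μ T (y + Pi.single i t) =
      linkPoly μ T y + t * linkPoly μ (insert i T) y := by
  simp only [linkPoly, Finset.mul_sum, ← Finset.sum_add_distrib]
  refine Finset.sum_congr rfl fun S _ => ?_
  by_cases hTS : T ⊆ S
  · by_cases hiS : i ∈ S
    · have h1 : S \ T = insert i (S \ insert i T) := by
        ext j
        by_cases hj : j = i
        · subst hj; simp [hiS, hi]
        · simp [hj]
      have h2 : ∏ j ∈ S \ insert i T, (y + Pi.single i t : ι → K) j =
          ∏ j ∈ S \ insert i T, y j := by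
        refine Finset.prod_congr rfl fun j hj => ?_
        have : j ≠ i := by rintro rfl; simp at hj
        simp [this]
      rw [if_pos hTS, if_pos hTS, if_pos (Finset.insert_subset hiS hTS), h1,
        Finset.prod_insert (by simp), Finset.prod_insert (by simp), h2]
      simp
      ring
    · have h2 : ∏ j ∈ S \ T, (y + Pi.single i t : ι → K) j = ∏ j ∈ S \ T, y j := by
        refine Finset.prod_congr rfl fun j hj => ?_
        have : j ≠ i := by rintro rfl; simp [hiS] at hj
        simp [this]
      rw [h2, if_neg (fun h : insert i T ⊆ S => hiS (h (by simp)))]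
      simp
  · rw [if_neg hTS, if_neg hTS, if_neg fun h => hTS ((Finset.subset_insert i T).trans h)]
    simp

theorem linkPoly_zero {K : Type*} [Field K] (μ : Finset ι → K) (T : Finset ι) :
    linkPoly μ T 0 = μ T := by
  rw [linkPoly, Finset.sum_eq_single T]
  · simp
  · intro S _ hST
    split_ifs with h
    · obtain ⟨j, hj⟩ : (S \ T).Nonempty := by
        rw [Finset.sdiff_nonempty]
        exact fun h' => hST (h'.antisymm h)
      rw [Finset.prod_eq_zero hj (by simp), mul_zero]
    · rfl
  · simp

theorem det_rowMatrix_add_single (A : Matrix ι ι ℂ) {U : Finset ι} (z : ι → ℂ) {i : ι}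
    (hi : i ∉ U) (t : ℂ) : (rowMatrix A U (z + Pi.single i t)).det =
      (rowMatrix A U z).det + t * (rowMatrix A (insert i U) z).det := by
  have h1 : rowMatrix A U (z + Pi.single i t) =
      (rowMatrix A U z).updateRow i (rowMatrix A U z i + t • (1 : Matrix ι ι ℂ) i) := by
    ext j k
    by_cases hj : j = i
    · subst hj
      rw [Matrix.updateRow_self]
      simp [rowMatrix, hi, Matrix.diagonal_apply, Matrix.one_apply]
      split_ifs <;> ring
    · rw [Matrix.updateRow_ne hj]
      by_cases hjU : j ∈ U <;> simp [rowMatrix, Matrix.diagonal_apply, hj, hjU]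
  have h2 : rowMatrix A (insert i U) z = (rowMatrix A U z).updateRow i ((1 : Matrix ι ι ℂ) i) := by
    ext j k
    by_cases hj : j = i
    · subst hj
      simp [rowMatrix]
    · rw [Matrix.updateRow_ne hj]
      simp [rowMatrix, hj]
  rw [h1, h2, Matrix.det_updateRow_add, Matrix.det_updateRow_smul, Matrix.updateRow_eq_self]

theorem rowMatrix_univ (A : Matrix ι ι ℂ) (z : ι → ℂ) : rowMatrix A Finset.univ z = 1 := by
  ext i j; simp [rowMatrix]

theorem det_rowMatrix_compl (A : Matrix ι ι ℂ) {T U : Finset ι} (hTU : ∀ i, i ∈ U ↔ i ∉ T)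
    (z : ι → ℂ) : (rowMatrix A U z).det =
      ((Matrix.diagonal z - A).submatrix (Subtype.val : {x // x ∈ T} → ι) Subtype.val).det := by
  have h1 : (rowMatrix A U z).toSquareBlockProp (· ∈ T) =
      (Matrix.diagonal z - A).submatrix (Subtype.val : {x // x ∈ T} → ι) Subtype.val := by
    ext i j
    simp [rowMatrix, Matrix.toSquareBlockProp_def, hTU]
  have h2 : (rowMatrix A U z).toSquareBlockProp (fun i => ¬ i ∈ T) = 1 := by
    ext i j
    rw [Matrix.toSquareBlockProp_def, Matrix.of_apply, rowMatrix, Matrix.of_apply,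
      if_pos ((hTU _).2 i.2), Matrix.one_apply, Matrix.one_apply]
    simp only [Subtype.ext_iff]
  rw [Matrix.twoBlockTriangular_det _ (· ∈ T), h1, h2, Matrix.det_one, mul_one]
  · congr!
  · intro i hi j hj
    have : i ≠ j := by rintro rfl; exact hi hj
    simp [rowMatrix, hTU, hi, this]

theorem continuous_linkPoly {μ : Finset ι → ℂ} {T : Finset ι} : Continuous (linkPoly μ T) := by
  unfold linkPoly
  refine continuous_finsetSum _ fun S _ => ?_
  split_ifs <;> fun_prop

theorem det_diagonal_sub_ne_zero {A : Matrix ι ι ℂ} (hA : A.IsHermitian) {z : ι → ℂ}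
    (hz : ∀ i, 0 < (z i).im) : (Matrix.diagonal z - A).det ≠ 0 := by
  intro h0
  obtain ⟨v, hv, hv0⟩ := Matrix.exists_mulVec_eq_zero_iff.2 h0
  have h1 : star v ⬝ᵥ (Matrix.diagonal z - A).mulVec v = 0 := by rw [hv0]; simp
  rw [Matrix.sub_mulVec, dotProduct_sub] at h1
  have h2 : (star v ⬝ᵥ A.mulVec v).im = 0 := hA.im_star_dotProduct_mulVec_self v
  have h3 : (star v ⬝ᵥ (Matrix.diagonal z).mulVec v).im =
      ∑ i, (z i).im * Complex.normSq (v i) := by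
    simp only [dotProduct, Matrix.mulVec_diagonal, Complex.im_sum]
    refine Finset.sum_congr rfl fun i _ => ?_
    have : star v i * (z i * v i) = z i * (Complex.normSq (v i) : ℂ) := by
      rw [Complex.normSq_eq_conj_mul_self]
      simp; ring
    rw [this, Complex.im_mul_ofReal]
  have h4 := congrArg Complex.im h1
  rw [Complex.sub_im, h2, h3, sub_zero, Complex.zero_im] at h4
  apply hv
  funext i
  have := (Finset.sum_eq_zero_iff_of_nonneg fun i _ =>
    mul_nonneg (hz i).le (Complex.normSq_nonneg _)).1 h4 i (Finset.mem_univ i)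
  simpa [(hz i).ne'] using this

end LinkDet

section MixedFamily

variable {ι : Type*} [DecidableEq ι]

theorem comp_inl_add_single_inl {K : Type*} [Field K] (w : ι ⊕ ι → K) (i : ι) (t : K) :
    (fun k => (w + Pi.single (.inl i) t : ι ⊕ ι → K) (.inl k)) =
      (fun k => w (.inl k)) + Pi.single i t := by
  funext k; simp [Pi.single_apply]

theorem comp_inl_add_single_inr {K : Type*} [Field K] (w : ι ⊕ ι → K) (i : ι) (t : K) :
    (fun k => (w + Pi.single (.inr i) t : ι ⊕ ι → K) (.inl k)) = fun k => w (.inl k) := by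
  funext k; simp

theorem comp_inr_add_single_inr {K : Type*} [Field K] (w : ι ⊕ ι → K) (i : ι) (t : K) :
    (fun k => (w + Pi.single (.inr i) t : ι ⊕ ι → K) (.inr k)) =
      (fun k => w (.inr k)) + Pi.single i t := by
  funext k; simp [Pi.single_apply]

theorem comp_inr_add_single_inl {K : Type*} [Field K] (w : ι ⊕ ι → K) (i : ι) (t : K) :
    (fun k => (w + Pi.single (.inl i) t : ι ⊕ ι → K) (.inr k)) = fun k => w (.inr k) := by
  funext k; simp

theorem isHermitian_diagonal_ofReal_sub {A : Matrix ι ι ℂ} (hA : A.IsHermitian) (z : ι → ℝ) :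
    (Matrix.diagonal (fun i => (z i : ℂ)) - A).IsHermitian := by
  refine Matrix.IsHermitian.sub ?_ hA
  rw [Matrix.IsHermitian, Matrix.diagonal_conjTranspose]
  congr 1
  funext i
  simp

theorem posDef_diagonal_sub {A : Matrix ι ι ℂ} (hAc : (1 - A).PosSemidef) {z : ι → ℝ}
    (hz : ∀ i, 1 < z i) :
    (Matrix.diagonal (fun i => (z i : ℂ)) - A).PosDef := by
  have h : (Matrix.diagonal fun i => ((z i - 1 : ℝ) : ℂ)).PosDef := by
    refine Matrix.PosDef.diagonal fun i => ?_
    rw [Complex.zero_lt_real]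
    linarith [hz i]
  convert h.add_posSemidef hAc using 1
  ext i j
  by_cases hij : i = j
  · subst hij; simp
  · simp [hij]

variable [Fintype ι]

/-- The products of partial derivatives of the generating polynomial of `μ` and of the polynomial
`det (diag z - A)`, restricted to real arguments. -/
noncomputable def mixedPoly (μ : Finset ι → ℝ) (A : Matrix ι ι ℂ) (T U : Finset ι)
    (w : ι ⊕ ι → ℝ) : ℝ :=
  linkPoly μ T (fun i => w (.inl i)) * (rowMatrix A U fun i => (w (.inr i) : ℂ)).det.re

variable {μ : Finset ι → ℝ} {A : Matrix ι ι ℂ}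

theorem pdiff_inl_mixedPoly {T U : Finset ι} {i : ι} (hi : i ∉ T) :
    pdiff (.inl i) (mixedPoly μ A T U) = mixedPoly μ A (insert i T) U := by
  funext w
  have h : (fun k => (((w + Pi.single (.inl i) 1 : ι ⊕ ι → ℝ) (.inr k) : ℝ) : ℂ)) =
      fun k => (w (.inr k) : ℂ) := by
    funext k; simp
  rw [pdiff, mixedPoly, comp_inl_add_single_inl, linkPoly_add_single μ _ hi, h, mixedPoly,
    mixedPoly]
  ring

theorem pdiff_inr_mixedPoly {T U : Finset ι} {i : ι} (hi : i ∉ U) :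
    pdiff (.inr i) (mixedPoly μ A T U) = mixedPoly μ A T (insert i U) := by
  funext w
  have h : (fun k => (((w + Pi.single (.inr i) 1 : ι ⊕ ι → ℝ) (.inr k) : ℝ) : ℂ)) =
      (fun k => (w (.inr k) : ℂ)) + Pi.single i 1 := by
    funext k; by_cases hk : k = i <;> simp [hk]
  rw [pdiff, mixedPoly, comp_inl_add_single_inr, h, det_rowMatrix_add_single A _ hi, mixedPoly,
    mixedPoly, one_mul, Complex.add_re]
  ring

theorem mixedPoly_induction {P : ((ι ⊕ ι → ℝ) → ℝ) → Prop} (h0 : P (mixedPoly μ A ∅ ∅))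
    (hP : ∀ G k, P G → P (pdiff k G)) (T U : Finset ι) : P (mixedPoly μ A T U) := by
  induction T using Finset.induction_on with
  | empty =>
    induction U using Finset.induction_on with
    | empty => exact h0
    | insert i U hi ih => exact pdiff_inr_mixedPoly (μ := μ) (A := A) hi ▸ hP _ _ ih
  | insert i T hi ih => exact pdiff_inl_mixedPoly (μ := μ) (A := A) hi ▸ hP _ _ ih

theorem im_det_eq_zero {M : Matrix ι ι ℂ} (hM : M.IsHermitian) : M.det.im = 0 := by
  have := M.det_conjTranspose
  rw [hM.eq] at this
  exact Complex.conj_eq_iff_im.1 this.symm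

theorem stableMultiaffine_mixedPoly_empty
    (hμ : ∀ z : ι → ℂ, (∀ i, 0 < (z i).im) → linkPoly (fun S => (μ S : ℂ)) ∅ z ≠ 0)
    (hA : A.IsHermitian) : StableMultiaffine (mixedPoly μ A ∅ ∅) := by
  refine ⟨fun w => linkPoly (fun S => (μ S : ℂ)) ∅ (fun i => w (.inl i)) *
    (rowMatrix A ∅ fun i => w (.inr i)).det, ?_, ?_, ?_, Or.inl ?_⟩
  · refine (continuous_linkPoly.comp (by fun_prop)).mul ?_
    simp only [rowMatrix_empty]
    refine Continuous.matrix_det ?_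
    exact (Continuous.matrix_diagonal (by fun_prop)).sub continuous_const
  · rintro w (i | i) t
    · simp only [pdiff, comp_inl_add_single_inl, comp_inr_add_single_inl,
        linkPoly_add_single _ _ (Finset.notMem_empty i)]
      ring
    · simp only [pdiff, comp_inl_add_single_inr, comp_inr_add_single_inr,
        det_rowMatrix_add_single A _ (Finset.notMem_empty i)]
      ring
  · intro w
    have h := im_det_eq_zero (isHermitian_diagonal_ofReal_sub hA fun i => w (.inr i))
    rw [mixedPoly, rowMatrix_empty, Complex.ofReal_mul]
    congr 1
    · simp [linkPoly]
    · exact Complex.ext (by simp) (by simpa using h)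
  · intro w hw
    rw [rowMatrix_empty]
    exact mul_ne_zero (hμ _ fun i => hw _) (det_diagonal_sub_ne_zero hA fun i => hw _)

end MixedFamily

section InitialBarrier

variable {ι : Type*} [DecidableEq ι] [Fintype ι] {μ : Finset ι → ℝ} {A : Matrix ι ι ℂ}

theorem linkPoly_pos (hμ0 : ∀ S, 0 ≤ μ S) (hμ1 : ∑ S, μ S = 1) {y : ι → ℝ} (hy : ∀ i, 0 < y i) :
    0 < linkPoly μ ∅ y := by
  have hne : ∃ S, μ S ≠ 0 := by
    by_contra! h
    simp [h] at hμ1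
  obtain ⟨S, hS⟩ := hne
  refine Finset.sum_pos' (fun S _ => ?_) ⟨S, Finset.mem_univ _, ?_⟩
  · rw [if_pos (Finset.empty_subset S)]
    exact mul_nonneg (hμ0 S) (Finset.prod_nonneg fun i _ => (hy i).le)
  · rw [if_pos (Finset.empty_subset S)]
    exact mul_pos ((hμ0 S).lt_of_ne' hS) (Finset.prod_pos fun i _ => hy i)

theorem re_det_pos {M : Matrix ι ι ℂ} (hM : M.PosDef) : 0 < M.det.re :=
  (Complex.lt_def.1 hM.det_pos).1

theorem positiveAbove_mixedPoly_empty (hμ0 : ∀ S, 0 ≤ μ S) (hμ1 : ∑ S, μ S = 1)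
    (hAc : (1 - A).PosSemidef) {t s : ℝ} (ht : 0 < t) (hs : 1 < s) :
    PositiveAbove (mixedPoly μ A ∅ ∅) (Sum.elim (fun _ => t) fun _ => s) := by
  intro w hw
  rw [mixedPoly, rowMatrix_empty]
  exact mul_pos (linkPoly_pos hμ0 hμ1 fun i => ht.trans_le (hw (.inl i)))
    (re_det_pos (posDef_diagonal_sub hAc fun i => hs.trans_le (hw (.inr i))))

theorem linkPoly_const_empty (hμ1 : ∑ S, μ S = 1) {d : ℕ} (hd : ∀ S, μ S ≠ 0 → S.card = d)
    (t : ℝ) : linkPoly μ ∅ (fun _ => t) = t ^ d := by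
  rw [linkPoly, ← one_mul (t ^ d), ← hμ1, Finset.sum_mul]
  refine Finset.sum_congr rfl fun S _ => ?_
  by_cases hS : μ S = 0
  · simp [hS]
  · simp [hd S hS]

theorem mul_linkPoly_const_singleton {d : ℕ} (hd : ∀ S, μ S ≠ 0 → S.card = d) (t : ℝ) (i : ι) :
    t * linkPoly μ {i} (fun _ => t) = (∑ S with i ∈ S, μ S) * t ^ d := by
  rw [linkPoly, Finset.sum_filter, Finset.sum_mul, Finset.mul_sum]
  refine Finset.sum_congr rfl fun S _ => ?_
  by_cases hi : i ∈ S
  · rw [if_pos (Finset.singleton_subset_iff.2 hi), if_pos hi]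
    by_cases hS : μ S = 0
    · simp [hS]
    · rw [Finset.prod_const, ← hd S hS, ← Finset.card_sdiff_add_card_eq_card
        (Finset.singleton_subset_iff.2 hi), Finset.card_singleton, pow_succ]
      ring
  · rw [if_neg (fun h => hi (Finset.singleton_subset_iff.1 h)), if_neg hi]
    ring

theorem posSemidef_const_add_single_sub (hA : A.PosSemidef) (hAc : (1 - A).PosSemidef) {α e : ℝ}
    {i : ι} (hα : (A i i).re ≤ α) (he : 0 < e) :
    (Matrix.diagonal ((fun _ => ((1 + 1 / e : ℝ) : ℂ)) +
      Pi.single i (-((1 + 1 / e - (1 + e) * α : ℝ) : ℂ))) - A).PosSemidef := by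
  have hii : A i i = ((A i i).re : ℂ) := by
    refine Complex.ext (by simp) ?_
    simpa using (Complex.le_def.1 (hA.diag_nonneg (i := i))).2.symm
  set u : ι → ℂ := fun j => if j = i then (e : ℂ) else -1
  set f : ι → ℂ := fun j => if j = i then 0 else 1
  have hu : star u = u := by
    funext j
    by_cases hj : j = i <;> simp [u, hj]
  have hf : star f = f := by
    funext j
    by_cases hj : j = i <;> simp [f, hj]
  have h1 : (Matrix.diagonal u * A * Matrix.diagonal u).PosSemidef := by
    simpa [Matrix.diagonal_conjTranspose, hu] using
      hA.mul_mul_conjTranspose_same (Matrix.diagonal u)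
  have h2 : (Matrix.diagonal f * (1 - A) * Matrix.diagonal f).PosSemidef := by
    simpa only [Matrix.diagonal_conjTranspose, hf] using
      hAc.mul_mul_conjTranspose_same (Matrix.diagonal f)
  have h3 : (Matrix.diagonal (Pi.single i ((α - (A i i).re : ℝ) : ℂ))).PosSemidef := by
    refine Matrix.PosSemidef.diagonal (Pi.single_nonneg.2 ?_)
    rw [Complex.zero_le_real]
    linarith
  have c1 : (0 : ℂ) ≤ ((1 / e : ℝ) : ℂ) := by rw [Complex.zero_le_real]; positivity
  have c2 : (0 : ℂ) ≤ ((1 + 1 / e : ℝ) : ℂ) := by rw [Complex.zero_le_real]; positivity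
  have c3 : (0 : ℂ) ≤ ((1 + e : ℝ) : ℂ) := by rw [Complex.zero_le_real]; positivity
  convert ((h1.smul c1).add (h2.smul c2)).add (h3.smul c3) using 1
  have hec : (e : ℂ) ≠ 0 := by exact_mod_cast he.ne'
  ext j k
  by_cases hj : j = i <;> by_cases hk : k = i
  · subst hj; subst hk
    simp [u, f]
    rw [← hii]
    field_simp
    ring
  · subst hj
    simp [u, f, Ne.symm hk, hk]
    field_simp
  · subst hk
    simp [u, f, hj]
    field_simp
  · by_cases hjk : j = k
    · subst hjk
      simp [u, f, hj]
      field_simp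
      ring
    · simp [u, f, hj, hk, hjk]
      field_simp
      ring

theorem initial_barrier (hμ1 : ∑ S, μ S = 1)
    {d : ℕ} (hd : ∀ S, μ S ≠ 0 → S.card = d) (hA : A.PosSemidef) (hAc : (1 - A).PosSemidef)
    {i : ι} {ε α e t b δ : ℝ} (hε : ∑ S with i ∈ S, μ S ≤ ε) (hα : (A i i).re ≤ α) (he : 0 < e)
    (ht : 0 < t) (hb : 0 < b) (hbe : b = 1 + 1 / e - (1 + e) * α) (hδ : 0 ≤ δ)
    (hδb : (ε / t + 1 / b) * δ ≤ 1) :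
    (pdiff (.inl i) (mixedPoly μ A ∅ ∅) (Sum.elim (fun _ => t) fun _ => 1 + 1 / e) +
      pdiff (.inr i) (mixedPoly μ A ∅ ∅) (Sum.elim (fun _ => t) fun _ => 1 + 1 / e)) * δ ≤
      mixedPoly μ A ∅ ∅ (Sum.elim (fun _ => t) fun _ => 1 + 1 / e) := by
  rw [pdiff_inl_mixedPoly (Finset.notMem_empty i), pdiff_inr_mixedPoly (Finset.notMem_empty i)]
  simp only [mixedPoly, Sum.elim_inl, Sum.elim_inr, linkPoly_const_empty hμ1 hd,
    insert_empty_eq]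
  have h1 := mul_linkPoly_const_singleton hd t i
  have hq : 0 < (rowMatrix A ∅ fun _ => ((1 + 1 / e : ℝ) : ℂ)).det.re := by
    rw [rowMatrix_empty]
    exact re_det_pos (posDef_diagonal_sub hAc fun _ => by
      have : 0 < 1 / e := by positivity
      linarith)
  have h2 := (Complex.le_def.1 (posSemidef_const_add_single_sub hA hAc hα he).det_nonneg).1
  rw [← rowMatrix_empty, det_rowMatrix_add_single A _ (Finset.notMem_empty i), ← hbe,
    ← Complex.ofReal_neg, Complex.add_re, Complex.re_ofReal_mul, Complex.zero_re,
    insert_empty_eq] at h2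
  set q := (rowMatrix A ∅ fun _ => ((1 + 1 / e : ℝ) : ℂ)).det.re
  set q' := (rowMatrix A {i} fun _ => ((1 + 1 / e : ℝ) : ℂ)).det.re
  have htd : 0 < t ^ d := by positivity
  have h3 : linkPoly μ {i} (fun _ => t) ≤ ε / t * t ^ d := by
    rw [div_mul_eq_mul_div, le_div_iff₀ ht, mul_comm, h1]
    gcongr
  have h4 : q' ≤ 1 / b * q := by
    rw [one_div, inv_mul_eq_div, le_div_iff₀ hb]
    linarith
  calc (linkPoly μ {i} (fun _ => t) * q + t ^ d * q') * δ
      ≤ (ε / t * t ^ d * q + t ^ d * (1 / b * q)) * δ := by gcongr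
    _ = ((ε / t + 1 / b) * δ) * (t ^ d * q) := by ring
    _ ≤ 1 * (t ^ d * q) := by gcongr
    _ = t ^ d * q := one_mul _

end InitialBarrier

section Eigenvalues

variable {ι : Type*} [DecidableEq ι]

theorem exists_det_submatrix_ne_zero [Fintype ι] {μ : Finset ι → ℝ} {A : Matrix ι ι ℂ}
    (hμ0 : ∀ S, 0 ≤ μ S) (hμ1 : ∑ S, μ S = 1)
    (hμ : ∀ z : ι → ℂ, (∀ i, 0 < (z i).im) → linkPoly (fun S => (μ S : ℂ)) ∅ z ≠ 0)
    {d : ℕ} (hd : ∀ S, μ S ≠ 0 → S.card = d) (hA : A.PosSemidef) (hAc : (1 - A).PosSemidef)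
    {ε α e t b δ₁ δ₂ x : ℝ} (hε : ∀ i, ∑ S with i ∈ S, μ S ≤ ε) (hα : ∀ i, (A i i).re ≤ α)
    (he : 0 < e) (ht : 0 < t) (hb : 0 < b) (hbe : b = 1 + 1 / e - (1 + e) * α)
    (hδ₁ : t < δ₁) (hδ₂ : 0 ≤ δ₂) (hδb : (ε / t + 1 / b) * (δ₁ + δ₂) ≤ 1)
    (hx : 1 + 1 / e - δ₂ < x) :
    ∃ S, 0 < μ S ∧ ∀ r : ℝ, x ≤ r → ((Matrix.diagonal (fun _ => (r : ℂ)) - A).submatrix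
      (Subtype.val : {i // i ∈ S} → ι) Subtype.val).det ≠ 0 := by
  set a : ι ⊕ ι → ℝ := Sum.elim (fun _ => t) fun _ => 1 + 1 / e
  set l : List ι := Finset.univ.toList
  have hs : 1 < 1 + 1 / e := by simpa using he
  have hinl : ∀ T U, ∀ i ∉ T,
      pdiff (.inl i) (mixedPoly μ A T U) = mixedPoly μ A (insert i T) U :=
    fun _ _ _ hi => pdiff_inl_mixedPoly hi
  have hinr : ∀ T U, ∀ i ∉ U,
      pdiff (.inr i) (mixedPoly μ A T U) = mixedPoly μ A T (insert i U) :=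
    fun _ _ _ hi => pdiff_inr_mixedPoly hi
  have hstable := stableMultiaffine_mixedPoly_empty hμ hA.isHermitian
  have hstables : ∀ T U, StableMultiaffine (mixedPoly μ A T U) :=
    mixedPoly_induction hstable fun _ k h => h.pdiff k
  have hpos : PositiveAbove (mixedPoly μ A ∅ ∅) a :=
    positiveAbove_mixedPoly_empty hμ0 hμ1 hAc ht hs
  have hnn : ∀ T U, Multiaffine (mixedPoly μ A T U) ∧ NonnegAbove (mixedPoly μ A T U) a :=
    mixedPoly_induction (P := fun G => Multiaffine G ∧ NonnegAbove G a)
      ⟨hstable.multiaffine, hpos.nonnegAbove⟩ fun _ k h => ⟨h.1.pdiff k, h.2.pdiff h.1 k⟩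
  have hne : iterSum l (mixedPoly μ A ∅ ∅) ≠ 0 := by
    intro h0
    have h := iterSum_family_pos hinl hinr (fun T U => (hnn T U).1) (fun T U => (hnn T U).2)
      (by
        rw [mixedPoly, rowMatrix_univ, Matrix.det_one, Complex.one_re, mul_one]
        exact linkPoly_pos hμ0 hμ1 fun _ => ht) (Finset.nodup_toList Finset.univ) (U := ∅)
      (by simp)
    rw [h0] at h
    exact lt_irrefl _ h
  have hbar := positiveAbove_iterSum (Finset.nodup_toList Finset.univ) (ht.trans hδ₁).le hδ₂
    hstable hpos (fun j _ => initial_barrier hμ1 hd hA hAc (hε j) (hα j) he ht hb hbe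
      (by linarith) hδb) hne
  set m := min (δ₁ - t) (x - (1 + 1 / e - δ₂))
  have hm : 0 < m := lt_min (by linarith) (by linarith)
  have hN : (0 : ℝ) < l.length + 1 := by positivity
  have hmN : l.length * (m / (l.length + 1)) ≤ m := by
    rw [mul_div_assoc', div_le_iff₀ hN]
    nlinarith
  have hm1 : m ≤ δ₁ - t := min_le_left _ _
  have hm2 : m ≤ x - (1 + 1 / e - δ₂) := min_le_right _ _
  obtain ⟨T, U, hdisj, hunion, hTU⟩ := exists_positiveAbove_of_iterSum hinl hinr hstables
    (div_pos hm hN) (b := Sum.elim (fun _ => 0) fun _ => x) (Finset.nodup_toList Finset.univ)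
    (T := ∅) (U := ∅) (by simp) (by simp) (hbar.mono (by
      rintro (k | k)
      · simp only [lowered, Sum.elim_inl, id, Finset.mem_toList, Finset.mem_univ, if_true, a]
        linarith
      · simp only [lowered, Sum.elim_inr, id, Finset.mem_toList, Finset.mem_univ, if_true, a]
        linarith))
  have hUT : ∀ i, i ∈ U ↔ i ∉ T := by
    intro i
    refine ⟨fun hi h => Finset.disjoint_left.1 hdisj h hi, fun hi => ?_⟩
    have : i ∈ T ∪ U := by rw [hunion]; simp
    exact (Finset.mem_union.1 this).resolve_left hi
  have key : ∀ r : ℝ, x ≤ r → 0 < μ T * ((Matrix.diagonal (fun _ => (r : ℂ)) - A).submatrix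
      (Subtype.val : {i // i ∈ T} → ι) Subtype.val).det.re := by
    intro r hr
    have h := hTU (Sum.elim (fun _ => 0) fun _ => r) (by rintro (k | k) <;> simp [hr])
    rwa [mixedPoly, det_rowMatrix_compl A hUT, show (fun i : ι => (Sum.elim (fun _ => (0 : ℝ))
      (fun _ => r) : ι ⊕ ι → ℝ) (.inl i)) = 0 from rfl, linkPoly_zero] at h
  refine ⟨T, (hμ0 T).lt_of_ne' (left_ne_zero_of_mul (key x le_rfl).ne'), fun r hr h0 => ?_⟩
  have := key r hr
  rw [h0] at this
  simp at this

theorem re_lt_of_isRoot_charpoly {m : Type*} [Fintype m] [DecidableEq m] {M : Matrix m m ℂ}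
    (hM : M.IsHermitian) {x : ℝ}
    (h : ∀ r : ℝ, x ≤ r → (Matrix.diagonal (fun _ => (r : ℂ)) - M).det ≠ 0) {z : ℂ}
    (hz : M.charpoly.IsRoot z) : z.re < x := by
  obtain ⟨r, rfl⟩ : ∃ r : ℝ, z = r := by
    have h1 := hz
    rw [hM.charpoly_eq, Polynomial.IsRoot, Polynomial.eval_prod, Finset.prod_eq_zero_iff] at h1
    obtain ⟨i, -, hi⟩ := h1
    exact ⟨hM.eigenvalues i, by simpa [sub_eq_zero] using hi⟩
  by_contra! hr
  refine h r hr ?_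
  have h2 : M.charpoly.eval (r : ℂ) = 0 := hz
  rwa [Matrix.eval_charpoly] at h2

end Eigenvalues

theorem diagonal_const_submatrix {ι κ K : Type*} [DecidableEq ι] [DecidableEq κ] [Zero K]
    {f : κ → ι} (hf : Function.Injective f) (r : K) :
    (Matrix.diagonal fun _ : ι => r).submatrix f f = Matrix.diagonal fun _ => r := by
  rw [Matrix.submatrix_diagonal _ _ hf]
  rfl

theorem barrier_endpoint_lt {e α : ℝ} (he : 0 < e) (he4 : e ≤ 1 / 4) (hα0 : 0 ≤ α) (hα1 : α ≤ 1) :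
    1 + 1 / e - (1 - e ^ 2) * (1 + 1 / e - (1 + e) * α) * (1 - 5 / 4 * e ^ 2) < 4 * e + α := by
  have h1 : (1 - e ^ 2) * (1 - 5 / 4 * e ^ 2) ≤ 1 := by
    have : e ^ 2 ≤ 1 := by nlinarith
    nlinarith [sq_nonneg e]
  have h2 : 1 - 9 / 4 * e ^ 2 ≤ (1 - e ^ 2) * (1 - 5 / 4 * e ^ 2) := by
    nlinarith [sq_nonneg (e ^ 2)]
  have h3 : (1 - (1 - e ^ 2) * (1 - 5 / 4 * e ^ 2)) * (1 + 1 / e) ≤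
      9 / 4 * e ^ 2 * (1 + 1 / e) := by
    gcongr
    linarith
  have h4 : (1 - e ^ 2) * (1 - 5 / 4 * e ^ 2) * ((1 + e) * α) ≤ 1 * ((1 + e) * α) := by gcongr
  have h5 : 9 / 4 * e ^ 2 * (1 + 1 / e) = 9 / 4 * e ^ 2 + 9 / 4 * e := by field_simp
  nlinarith

/-- Eigenvalue bound upon sampling from a homogeneous Strongly Rayleigh measure with
small marginals: there is a set `S` in the support of `μ` such that all eigenvalues of
`A(S)` are strictly less than `4·ε^{1/4} + α`. -/
theorem strongly_rayleigh_eigenvalue_bound {n : ℕ} (μ : Finset (Fin n) → ℝ)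
    (hμ0 : ∀ S, 0 ≤ μ S) (hμ1 : ∑ S : Finset (Fin n), μ S = 1)
    (hSR : RealStable (genPoly μ))
    (hhom : ∃ d : ℕ, ∀ S, μ S ≠ 0 → S.card = d)
    (hne : ∀ S, μ S ≠ 0 → S.Nonempty)
    (ε : ℝ) (hε0 : 0 < ε) (hε1 : ε ≤ 1)
    (hmarg : ∀ i : Fin n, ∑ S ∈ Finset.univ.filter (fun S : Finset (Fin n) => i ∈ S), μ S ≤ ε)
    (A : Matrix (Fin n) (Fin n) ℂ) (hA : A.PosSemidef) (hAc : (1 - A).PosSemidef)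
    (α : ℝ) (hα : 0 ≤ α) (hdiag : ∀ i, (A i i).re ≤ α)
    (hsq : Real.sqrt α + Real.sqrt ε ≤ 1) :
    ∃ S : Finset (Fin n), 0 < μ S ∧
      ∀ z : ℂ, ((subMat A S).charpoly).IsRoot z →
        z.re < 4 * ε ^ ((1 : ℝ) / 4) + α := by
  set e : ℝ := ε ^ ((1 : ℝ) / 4) with he_def
  have he : 0 < e := by positivity
  have heε : e ^ 4 = ε := by
    rw [he_def, ← Real.rpow_natCast, ← Real.rpow_mul hε0.le]
    norm_num
  suffices h : ∃ S, 0 < μ S ∧ ∀ r : ℝ, 4 * e + α ≤ r →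
      ((Matrix.diagonal (fun _ => (r : ℂ)) - A).submatrix
        (Subtype.val : {i // i ∈ S} → Fin n) Subtype.val).det ≠ 0 by
    obtain ⟨S, hS, h⟩ := h
    refine ⟨S, hS, fun z hz => re_lt_of_isRoot_charpoly (hA.isHermitian.submatrix _)
      (fun r hr => ?_) hz⟩
    have h1 := h r hr
    rwa [Matrix.submatrix_sub, Pi.sub_apply, Pi.sub_apply,
      diagonal_const_submatrix Subtype.val_injective] at h1
  rcases lt_or_ge (1 / 4) e with he4 | he4
  · obtain ⟨S, hS⟩ : ∃ S, μ S ≠ 0 := by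
      by_contra! h
      simp [h] at hμ1
    refine ⟨S, (hμ0 S).lt_of_ne' hS, fun r hr => ?_⟩
    exact ((posDef_diagonal_sub hAc (z := fun _ => r) fun _ => by linarith).submatrix
      Subtype.val_injective).det_pos.ne'
  · obtain ⟨d, hd⟩ := hhom
    have hα1 : α ≤ 1 := by
      have h := Real.sqrt_nonneg ε
      exact (Real.sqrt_le_one).1 (by linarith)
    set b : ℝ := 1 + 1 / e - (1 + e) * α with hb_def
    have hinv : 4 ≤ 1 / e := by rw [le_div_iff₀ he]; linarith
    have hb : 0 < b := by nlinarith
    have h1e : 0 < 1 - e ^ 2 := by nlinarith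
    have h2e : 0 < 1 - 5 / 4 * e ^ 2 := by nlinarith
    have ht : 0 < e ^ 2 * (1 - e ^ 2) * b := by positivity
    refine exists_det_submatrix_ne_zero hμ0 hμ1 (fun z hz => ?_) hd hA hAc hmarg hdiag he ht hb
      hb_def (δ₁ := 5 / 4 * (e ^ 2 * (1 - e ^ 2) * b))
      (δ₂ := (1 - e ^ 2) * b * (1 - 5 / 4 * e ^ 2)) (by linarith) (by positivity) (le_of_eq ?_)
      (barrier_endpoint_lt he he4 hα hα1)
    · have := hSR z hz
      simpa [genPoly, linkPoly] using this
    · rw [← heε]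
      have := h1e.ne'
      have := hb.ne'
      field_simp
      ring
end
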